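/- arXiv:math-ph/0211016 — 4 statements merged into one kernel-verified Lean document; each statement's English description precedes it below -/
import Mathlib

section
/- Let M, N₁, N₂, P be finite type I factors forming a commuting square (i.e., M ⊇ N₁, N₂ ⊇ P and E_M^{N₁}E_M^{N₂} = E_M^{N₂}E_M^{N₁} = E_M^P for the τ-preserving conditional expectations). Then for any state ψ on M, the adjusted entropies satisfy the strong subadditivity inequality Ŝ(ψ) − Ŝ(ψ|_{N₁}) − Ŝ(ψ|_{N₂}) + Ŝ(ψ|_P) ≤ 0. -/
/-!
Strong subadditivity is monotonicity of relative entropy read off a commuting square. Write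
`D(ρ‖σ) = τ(ρ log ρ) - τ(ρ log σ)`. Since `log ρ₁ ∈ N₁`, one has
`D(ρ‖ρ₁) = Ŝ(ψ|N₁) - Ŝ(ψ)`, and likewise `D(ρ₂‖ρP) = Ŝ(ψ|P) - Ŝ(ψ|N₂)`. The commuting square
gives `E₂ ρ₁ = E₂ (E₁ ρ) = ρP`, so restricting the densities `ρ, ρ₁` to `N₂` yields `ρ₂, ρP`, and
the claim is `D(ρ₂‖ρP) ≤ D(ρ‖ρ₁)`.

Monotonicity itself (`relEntropy_mono`) rests on the integral formula
`D(ρ‖σ) - τ(ρ - σ) = ∫₀¹ (1 - t) ⟨ρ - σ, Tₜ⁻¹ (ρ - σ)⟩ dt`, where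
`Tₜ x = (1 - t) x σ + t ρ x` acts on `M` with inner product `⟨x, y⟩ = τ(x⋆ y)`. This pairing is
the maximum over `x ∈ M` of `2 Re ⟨x, ρ - σ⟩ - ⟨x, Tₜ x⟩` (`variational_le`); for `x` in the
subalgebra `N` this expression only sees the restrictions of `ρ` and `σ`, so passing to `N` just
takes the maximum over a smaller set. The formula is used in differentiated form, as a path with
prescribed endpoints and derivative (`exists_path`), built from the spectral decompositions of `ρ`
and `σ`. Densities are first shifted by `ε > 0` to make them invertible, then `ε → 0`
(`tendsto_entropy`).
-/

open scoped ComplexOrder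

/-- The adjusted entropy `Ŝ(ψ) = −ψ(log ρ_ψ) = −τ(ρ_ψ · log ρ_ψ)` of a state `ψ` with
adjusted density matrix `ρ` with respect to the tracial state `τ`; the logarithm `log ρ` is
taken by the continuous functional calculus (with the convention `Real.log 0 = 0`, under which
`τ (ρ * cfc Real.log ρ)` agrees with the usual `ψ(log ρ)`). -/
noncomputable def adjustedEntropy {M : Type*} [CStarAlgebra M]
    (τ : M →L[ℂ] ℂ) (ρ : M) : ℝ :=
  -(τ (ρ * cfc Real.log ρ)).re

/-! ### Spectral decompositions in finite dimension -/

section Spectral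

variable {M : Type*} [CStarAlgebra M]

/-- `a = ∑ i ∈ s, i • e i` is a spectral decomposition of a self-adjoint element with finite real
spectrum `s`: the `e i` are the spectral projections, and the functional calculus of `a` is
evaluated through them. Idempotency of the `e i` is never needed, so it is not recorded. -/
structure IsSpectralDecomp (a : M) (s : Finset ℝ) (e : ℝ → M) : Prop where
  mem_spectrum : ∀ i, i ∈ s ↔ i ∈ spectrum ℝ a
  star_eq : ∀ i, star (e i) = e i
  mul_left : ∀ i ∈ s, a * e i = i • e i
  mul_right : ∀ i ∈ s, e i * a = i • e i
  cfc_eq : ∀ f : ℝ → ℝ, cfc f a = ∑ i ∈ s, f i • e i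
  sum_one : ∑ i ∈ s, e i = 1
  sum_smul : ∑ i ∈ s, i • e i = a
  mem : ∀ N : StarSubalgebra ℂ M, a ∈ N → ∀ i, e i ∈ N

lemma finite_real_spectrum [FiniteDimensional ℂ M] (a : M) : (spectrum ℝ a).Finite := by
  have : FiniteDimensional ℝ M := FiniteDimensional.complexToReal M
  have hi : IsIntegral ℝ a := Algebra.IsIntegral.isIntegral a
  refine ((minpoly ℝ a).roots.toFinset.finite_toSet).subset fun x hx => ?_
  have h := spectrum.subset_polynomial_aeval a (minpoly ℝ a) ⟨x, hx, rfl⟩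
  rw [minpoly.aeval] at h
  have : Nontrivial M := by
    by_contra hn
    rw [not_nontrivial_iff_subsingleton] at hn
    simp [spectrum.of_subsingleton] at hx
  rw [spectrum.zero_eq] at h
  simp only [Finset.mem_coe, Multiset.mem_toFinset,
    Polynomial.mem_roots (minpoly.ne_zero hi), Polynomial.IsRoot]
  simpa using h

lemma cfc_mem_starSubalgebra [FiniteDimensional ℂ M] (N : StarSubalgebra ℂ M) (f : ℝ → ℝ)
    {a : M} (ha : a ∈ N) : cfc f a ∈ N := by
  have hc : IsClosed (N : Set M) := N.toSubalgebra.toSubmodule.closed_of_finiteDimensional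
  exact cfc_mem (𝕜' := ℂ) (hs := hc) f ha

lemma exists_isSpectralDecomp [FiniteDimensional ℂ M] (a : M) (ha : IsSelfAdjoint a) :
    ∃ s e, IsSpectralDecomp a s e := by
  classical
  have hfin := finite_real_spectrum a
  have hcont : ∀ f : ℝ → ℝ, ContinuousOn f (spectrum ℝ a) := fun f => hfin.continuousOn f
  let e : ℝ → M := fun i => cfc (fun x => if x = i then (1 : ℝ) else 0) a
  have hcfc : ∀ f : ℝ → ℝ, cfc f a = ∑ i ∈ hfin.toFinset, f i • e i := by
    intro f
    calc cfc f a = cfc (∑ i ∈ hfin.toFinset, fun x => f i * if x = i then (1 : ℝ) else 0) a := by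
          refine cfc_congr fun x hx => ?_
          simp [Finset.sum_apply, hx]
      _ = _ := by
          rw [cfc_sum _ _ _ (fun i _ => hcont _)]
          exact Finset.sum_congr rfl fun i _ => cfc_const_mul _ _ _ (hcont _)
  have hcomm : ∀ i ∈ hfin.toFinset, a * e i = i • e i ∧ e i * a = i • e i := by
    intro i _
    have key : cfc (fun x => x * if x = i then (1 : ℝ) else 0) a = i • e i := by
      rw [← cfc_const_mul _ _ _ (hcont _)]
      refine cfc_congr fun x _ => ?_
      by_cases h : x = i <;> simp [h]
    have h1 : cfc (fun x => x * if x = i then (1 : ℝ) else 0) a = a * e i := by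
      rw [cfc_mul _ _ a (hcont _) (hcont _), cfc_id' ℝ a]
    have h2 : a * e i = e i * a := by
      have := cfc_commute_cfc (fun x : ℝ => x) (fun x => if x = i then (1 : ℝ) else 0) a
      rw [cfc_id' ℝ a] at this
      exact this
    exact ⟨h1 ▸ key, h2 ▸ h1 ▸ key⟩
  refine ⟨hfin.toFinset, e, fun i => by simp, fun i => ?_, fun i hi => (hcomm i hi).1,
    fun i hi => (hcomm i hi).2, hcfc, ?_, ?_, fun N haN i => cfc_mem_starSubalgebra N _ haN⟩
  · exact (cfc_predicate (R := ℝ) _ a : IsSelfAdjoint (e i)).star_eq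
  · simpa [cfc_const_one ℝ a] using (hcfc fun _ => 1).symm
  · simpa [cfc_id' ℝ a] using (hcfc fun x => x).symm

end Spectral

/-! ### Monotonicity of relative entropy for invertible densities -/

section Monotonicity

variable {M : Type*} [CStarAlgebra M]

/-- The variational principle for the positive quadratic form of
`x ↦ (1 - t) • (x * σ) + t • (ρ * x)`: a preimage `x₀` of `ρ - σ` maximises
`2 ⟨x, ρ - σ⟩ - (1 - t) ⟨x, x σ⟩ - t ⟨x, ρ x⟩`, where `⟨x, y⟩ = φ (x⋆ y)`. -/
lemma variational_le [PartialOrder M] [StarOrderedRing M] (φ : M →ₗ[ℝ] ℝ)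
    (htr : ∀ x y, φ (x * y) = φ (y * x)) (hpos : ∀ x, 0 ≤ φ (star x * x))
    (hstar : ∀ x, φ (star x) = φ x) {ρ σ : M} (hρ : 0 ≤ ρ) (hσ : 0 ≤ σ) {t : ℝ}
    (ht0 : 0 ≤ t) (ht1 : t ≤ 1) (x₀ : M)
    (hx₀ : (1 - t) • (x₀ * σ) + t • (ρ * x₀) = ρ - σ) (x : M) :
    2 * φ (star x * (ρ - σ)) - (1 - t) * φ (star x * x * σ) - t * φ (star x * ρ * x)
      ≤ φ (star x₀ * (ρ - σ)) := by
  have hsρ : star ρ = ρ := (IsSelfAdjoint.of_nonneg hρ).star_eq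
  have hsσ : star σ = σ := (IsSelfAdjoint.of_nonneg hσ).star_eq
  have h1 : 0 ≤ φ (star (x - x₀) * (x - x₀) * σ) := by
    obtain ⟨b, hb⟩ := CStarAlgebra.nonneg_iff_eq_star_mul_self.1 hσ
    have := hpos ((x - x₀) * star b)
    rw [star_mul, star_star, mul_assoc, htr] at this
    rw [hb]
    simpa only [mul_assoc] using this
  have h2 : 0 ≤ φ (star (x - x₀) * ρ * (x - x₀)) := by
    obtain ⟨b, hb⟩ := CStarAlgebra.nonneg_iff_eq_star_mul_self.1 hρ
    have := hpos (b * (x - x₀))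
    rw [star_mul] at this
    rw [hb]
    simpa only [mul_assoc] using this
  have h3 : φ (star x₀ * x * σ) = φ (star x * x₀ * σ) := by
    rw [← hstar, star_mul, star_mul, star_star, hsσ, htr]
  have h4 : φ (star x₀ * ρ * x) = φ (star x * ρ * x₀) := by
    rw [← hstar, star_mul, star_mul, star_star, hsρ, mul_assoc]
  have h5 : ∀ y, (1 - t) * φ (star y * x₀ * σ) + t * φ (star y * ρ * x₀)
      = φ (star y * (ρ - σ)) := by
    intro y
    rw [← hx₀]
    simp [mul_add, mul_assoc]
  have h6 := h5 x
  have h7 := h5 x₀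
  simp only [star_sub, sub_mul, mul_sub, map_sub] at h1 h2
  have h8 := mul_nonneg (sub_nonneg.2 ht1) h1
  have h9 := mul_nonneg ht0 h2
  rw [h3] at h8
  rw [h4] at h9
  linarith

/-- The scalar function `t ↦ p log u - u` with `u = q + t (p - q)` runs from `p log q - q` to
`p log p - p`, and its derivative carries the factor `(p - q)² / u`. -/
lemma hasDerivAt_path {p q : ℝ} (t : ℝ) (hu : 0 < q + t * (p - q)) :
    HasDerivAt (fun t => p * Real.log (q + t * (p - q)) - (q + t * (p - q)))
      ((1 - t) * ((p - q) ^ 2 / (q + t * (p - q)))) t := by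
  have h : HasDerivAt (fun t : ℝ => q + t * (p - q)) (p - q) t := by
    simpa using ((hasDerivAt_id t).mul_const (p - q)).const_add q
  have hne := hu.ne'
  refine (((h.log hne).const_mul p).sub h).congr_deriv ?_
  have e : p - (q + t * (p - q)) = (1 - t) * (p - q) := by ring
  generalize q + t * (p - q) = u at hne e ⊢
  rw [eq_comm, ← mul_div_assoc, div_eq_iff hne, sub_mul _ _ u, mul_assoc p,
    div_mul_cancel₀ _ hne]
  linear_combination (-(p - q)) * e

lemma convex_pos {p q t : ℝ} (hp : 0 < p) (hq : 0 < q) (ht0 : 0 ≤ t) (ht1 : t ≤ 1) :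
    0 < q + t * (p - q) := by
  rcases ht0.eq_or_lt with rfl | h
  · simpa
  · nlinarith [mul_pos h hp, mul_nonneg (sub_nonneg.2 ht1) hq.le]

/-- A path from `φ (ρ log σ) - φ σ` to `φ (ρ log ρ) - φ ρ` whose derivative is `1 - t` times the
maximum in `variational_le`. The maximiser is found inside any subalgebra containing `ρ, σ`. -/
lemma exists_path [FiniteDimensional ℂ M] (φ : M →ₗ[ℝ] ℝ)
    (htr : ∀ x y, φ (x * y) = φ (y * x)) {ρ σ : M} (hρ : IsSelfAdjoint ρ) (hσ : IsSelfAdjoint σ)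
    (hρs : ∀ i ∈ spectrum ℝ ρ, 0 < i) (hσs : ∀ i ∈ spectrum ℝ σ, 0 < i) :
    ∃ H : ℝ → ℝ, H 1 = φ (ρ * cfc Real.log ρ) - φ ρ ∧ H 0 = φ (ρ * cfc Real.log σ) - φ σ ∧
      ∀ t, 0 ≤ t → t ≤ 1 → ∃ x : M,
        (∀ N : StarSubalgebra ℂ M, ρ ∈ N → σ ∈ N → x ∈ N) ∧
        (1 - t) • (x * σ) + t • (ρ * x) = ρ - σ ∧
        HasDerivAt H ((1 - t) * φ (star x * (ρ - σ))) t := by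
  obtain ⟨s, e, he⟩ := exists_isSpectralDecomp ρ hρ
  obtain ⟨r, g, hg⟩ := exists_isSpectralDecomp σ hσ
  -- double sums collapse through `∑ e = 1` and `∑ g = 1`
  have hleft : ∀ f : ℝ → ℝ, ∑ i ∈ s, ∑ j ∈ r, f i • (e i * g j) = ∑ i ∈ s, f i • e i := by
    intro f
    refine Finset.sum_congr rfl fun i _ => ?_
    rw [← Finset.smul_sum, ← Finset.mul_sum, hg.sum_one, mul_one]
  have hright : ∀ f : ℝ → ℝ, ∑ i ∈ s, ∑ j ∈ r, f j • (e i * g j) = ∑ j ∈ r, f j • g j := by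
    intro f
    rw [Finset.sum_comm]
    refine Finset.sum_congr rfl fun j _ => ?_
    rw [← Finset.smul_sum, ← Finset.sum_mul, he.sum_one, one_mul]
  have hphi : ∀ f : ℝ → ℝ → ℝ, ∑ i ∈ s, ∑ j ∈ r, φ (e i * g j) * f i j
      = φ (∑ i ∈ s, ∑ j ∈ r, f i j • (e i * g j)) := by
    intro f
    simp only [map_sum, map_smul, smul_eq_mul, mul_comm]
  have hmul : ρ * cfc Real.log σ = ∑ i ∈ s, ∑ j ∈ r, (i * Real.log j) • (e i * g j) := by
    rw [hg.cfc_eq]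
    conv_lhs => rw [← he.sum_smul]
    simp only [Finset.sum_mul_sum, smul_mul_smul_comm]
  have hmul' : ρ * cfc Real.log ρ = ∑ i ∈ s, (i * Real.log i) • e i := by
    rw [he.cfc_eq, Finset.mul_sum]
    refine Finset.sum_congr rfl fun i hi => ?_
    rw [mul_smul_comm, he.mul_left i hi, smul_smul, mul_comm]
  refine ⟨fun t => ∑ i ∈ s, ∑ j ∈ r,
    φ (e i * g j) * (i * Real.log (j + t * (i - j)) - (j + t * (i - j))), ?_, ?_, ?_⟩
  · simp only [one_mul, add_sub_cancel]
    rw [hphi, hleft (fun i => i * Real.log i - i), ← map_sub, hmul']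
    simp only [sub_smul, Finset.sum_sub_distrib, he.sum_smul]
  · simp only [zero_mul, add_zero]
    rw [hphi, ← map_sub, hmul]
    simp only [sub_smul, Finset.sum_sub_distrib]
    rw [hright (fun j => j), hg.sum_smul]
  · intro t ht0 ht1
    have hu : ∀ i ∈ s, ∀ j ∈ r, 0 < j + t * (i - j) := fun i hi j hj =>
      convex_pos (hρs i ((he.mem_spectrum i).1 hi)) (hσs j ((hg.mem_spectrum j).1 hj)) ht0 ht1
    refine ⟨∑ i ∈ s, ∑ j ∈ r, ((i - j) / (j + t * (i - j))) • (e i * g j), ?_, ?_, ?_⟩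
    · intro N hρN hσN
      refine sum_mem fun i _ => sum_mem fun j _ => ?_
      have := N.smul_mem (mul_mem (he.mem N hρN i) (hg.mem N hσN j))
        ((((i - j) / (j + t * (i - j)) : ℝ)) : ℂ)
      rwa [Complex.coe_smul] at this
    · calc _ = ∑ i ∈ s, ∑ j ∈ r, (i - j) • (e i * g j) := by
            simp only [Finset.sum_mul, Finset.mul_sum, Finset.smul_sum, ← Finset.sum_add_distrib]
            refine Finset.sum_congr rfl fun i hi => Finset.sum_congr rfl fun j hj => ?_
            rw [smul_mul_assoc, mul_smul_comm, mul_assoc, hg.mul_right j hj, ← mul_assoc,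
              he.mul_left i hi, smul_mul_assoc, mul_smul_comm]
            simp only [smul_smul, ← add_smul]
            congr 1
            have := (hu i hi j hj).ne'
            field_simp
            ring
        _ = ρ - σ := by
            simp only [sub_smul, Finset.sum_sub_distrib]
            rw [hleft (fun i => i), hright (fun j => j), he.sum_smul, hg.sum_smul]
    · have hval : (1 - t) * φ (star (∑ i ∈ s, ∑ j ∈ r,
            ((i - j) / (j + t * (i - j))) • (e i * g j)) * (ρ - σ))
          = ∑ i ∈ s, ∑ j ∈ r, φ (e i * g j) * ((1 - t) * ((i - j) ^ 2 / (j + t * (i - j)))) := by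
        simp only [star_sum, star_smul, star_mul, he.star_eq, hg.star_eq, Finset.sum_mul, map_sum,
          Finset.mul_sum, smul_mul_assoc, map_smul, smul_eq_mul, star_trivial]
        refine Finset.sum_congr rfl fun i hi => Finset.sum_congr rfl fun j hj => ?_
        have h1 : φ (g j * e i * (ρ - σ)) = (i - j) * φ (e i * g j) := by
          rw [mul_sub, map_sub, mul_assoc, he.mul_right i hi, htr (g j * e i) σ, ← mul_assoc,
            hg.mul_left j hj, mul_smul_comm, smul_mul_assoc, map_smul, map_smul, smul_eq_mul,
            smul_eq_mul, htr (g j) (e i), sub_mul]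
        rw [h1]
        ring
      rw [hval]
      exact HasDerivAt.fun_sum fun i hi => HasDerivAt.fun_sum fun j hj =>
        (hasDerivAt_path t (hu i hi j hj)).const_mul _

/-- Monotonicity of relative entropy under restriction to a subalgebra, for invertible densities:
`ρ'` and `σ'` are the densities of the restrictions to `N` of the functionals with densities
`ρ` and `σ`. -/
lemma relEntropy_mono [PartialOrder M] [StarOrderedRing M] [FiniteDimensional ℂ M]
    (φ : M →ₗ[ℝ] ℝ) (htr : ∀ x y, φ (x * y) = φ (y * x)) (hpos : ∀ x, 0 ≤ φ (star x * x))
    (hstar : ∀ x, φ (star x) = φ x) (N : StarSubalgebra ℂ M) {ρ σ ρ' σ' : M}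
    (hρ : 0 ≤ ρ) (hσ : 0 ≤ σ) (hρ' : 0 ≤ ρ') (hσ' : 0 ≤ σ')
    (hρs : ∀ i ∈ spectrum ℝ ρ, 0 < i) (hσs : ∀ i ∈ spectrum ℝ σ, 0 < i)
    (hρs' : ∀ i ∈ spectrum ℝ ρ', 0 < i) (hσs' : ∀ i ∈ spectrum ℝ σ', 0 < i)
    (hρN : ρ' ∈ N) (hσN : σ' ∈ N)
    (hρE : ∀ b ∈ N, φ (ρ * b) = φ (ρ' * b)) (hσE : ∀ b ∈ N, φ (σ * b) = φ (σ' * b)) :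
    φ (ρ' * cfc Real.log ρ') - φ (ρ' * cfc Real.log σ')
      ≤ φ (ρ * cfc Real.log ρ) - φ (ρ * cfc Real.log σ) := by
  obtain ⟨H, H1, H0, hH⟩ := exists_path φ htr (.of_nonneg hρ) (.of_nonneg hσ) hρs hσs
  obtain ⟨H', H1', H0', hH'⟩ := exists_path φ htr (.of_nonneg hρ') (.of_nonneg hσ') hρs' hσs'
  have hρ1 : φ ρ = φ ρ' := by simpa using hρE 1 (one_mem N)
  have hσ1 : φ σ = φ σ' := by simpa using hσE 1 (one_mem N)
  have hder : ∀ t ∈ Set.Icc (0 : ℝ) 1, ∃ d, 0 ≤ d ∧ HasDerivAt (fun t => H t - H' t) d t := by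
    rintro t ⟨ht0, ht1⟩
    obtain ⟨x, -, hxT, hxd⟩ := hH t ht0 ht1
    obtain ⟨y, hyN, hyT, hyd⟩ := hH' t ht0 ht1
    refine ⟨_, ?_, hxd.sub hyd⟩
    have hy := hyN N hρN hσN
    have hsy := star_mem hy
    -- the maximiser for `N` is a competitor in `M` with the same value of the functional
    have hv := variational_le φ htr hpos hstar hρ hσ ht0 ht1 x hxT y
    have e1 : φ (star y * (ρ - σ)) = φ (star y * (ρ' - σ')) := by
      rw [htr, htr _ (ρ' - σ'), sub_mul, sub_mul, map_sub, map_sub, hρE _ hsy, hσE _ hsy]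
    have e2 : φ (star y * y * σ) = φ (star y * y * σ') := by
      rw [htr, htr _ σ', hσE _ (mul_mem hsy hy)]
    have e3 : φ (star y * ρ * y) = φ (star y * ρ' * y) := by
      rw [mul_assoc, mul_assoc, htr, htr _ (ρ' * y), mul_assoc, mul_assoc,
        hρE _ (mul_mem hy hsy)]
    have e4 : (1 - t) * φ (star y * y * σ') + t * φ (star y * ρ' * y)
        = φ (star y * (ρ' - σ')) := by
      rw [← hyT]
      simp [mul_add, mul_assoc]
    rw [e1, e2, e3] at hv
    rw [← mul_sub]
    exact mul_nonneg (sub_nonneg.2 ht1) (by linarith)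
  have hmono : MonotoneOn (fun t => H t - H' t) (Set.Icc (0 : ℝ) 1) := by
    refine monotoneOn_of_deriv_nonneg (convex_Icc 0 1) (fun t ht => ?_) (fun t ht => ?_)
      (fun t ht => ?_)
    · obtain ⟨d, -, hd⟩ := hder t ht
      exact hd.continuousAt.continuousWithinAt
    · obtain ⟨d, -, hd⟩ := hder t (interior_subset ht)
      exact hd.differentiableAt.differentiableWithinAt
    · obtain ⟨d, hd0, hd⟩ := hder t (interior_subset ht)
      rwa [hd.deriv]
  have := hmono (Set.left_mem_Icc.2 zero_le_one) (Set.right_mem_Icc.2 zero_le_one) zero_le_one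
  simp only [H1, H0, H1', H0'] at this
  linarith

end Monotonicity

/-! ### Regularisation of singular densities -/

section Regularisation

variable {M : Type*} [CStarAlgebra M]

lemma spectrum_add_pos [PartialOrder M] [StarOrderedRing M] {a : M} (ha : 0 ≤ a) {ε : ℝ} (hε : 0 < ε) :
    ∀ i ∈ spectrum ℝ (a + algebraMap ℝ M ε), 0 < i := by
  intro i hi
  rw [← spectrum.add_singleton_eq] at hi
  obtain ⟨j, hj, k, hk, rfl⟩ := Set.mem_add.1 hi
  rw [Set.mem_singleton_iff.1 hk]
  have := spectrum_nonneg_of_nonneg ha hj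
  positivity

lemma algebraMap_mem_real (N : StarSubalgebra ℂ M) (ε : ℝ) : algebraMap ℝ M ε ∈ N := by
  have := N.smul_mem (one_mem N) (ε : ℂ)
  rwa [Complex.coe_smul, ← Algebra.algebraMap_eq_smul_one] at this

/-- Adding `ε` makes a density invertible, and the entropy is recovered as `ε → 0`. -/
lemma tendsto_entropy [PartialOrder M] [StarOrderedRing M] [FiniteDimensional ℂ M]
    (φ : M →ₗ[ℝ] ℝ) {a : M} (ha : 0 ≤ a) :
    Filter.Tendsto (fun ε : ℝ => φ ((a + algebraMap ℝ M ε) * cfc Real.log (a + algebraMap ℝ M ε)))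
      (nhdsWithin 0 (Set.Ioi 0)) (nhds (φ (a * cfc Real.log a))) := by
  have hsa : IsSelfAdjoint a := .of_nonneg ha
  obtain ⟨s, e, he⟩ := exists_isSpectralDecomp a hsa
  have hfin := finite_real_spectrum a
  have key : ∀ ε : ℝ, φ ((a + algebraMap ℝ M ε) * cfc Real.log (a + algebraMap ℝ M ε))
      = ∑ i ∈ s, ((i + ε) * Real.log (i + ε)) * φ (e i) := by
    intro ε
    have h1 : cfc (fun x : ℝ => x + ε) a = a + algebraMap ℝ M ε := by
      rw [cfc_add_const ε (fun x : ℝ => x) a, cfc_id' ℝ a]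
    have h2 : cfc (fun x : ℝ => Real.log (x + ε)) a = cfc Real.log (a + algebraMap ℝ M ε) := by
      rw [← h1]
      exact cfc_comp Real.log (fun x => x + ε) a hsa ((hfin.image _).continuousOn _)
        (hfin.continuousOn _)
    rw [← h2]
    nth_rewrite 1 [← h1]
    rw [← cfc_mul _ _ a (hfin.continuousOn _) (hfin.continuousOn _), he.cfc_eq]
    simp
  have h0 : φ (a * cfc Real.log a)
      = ∑ i ∈ s, ((i + 0) * Real.log (i + 0)) * φ (e i) := by
    rw [← key 0]
    simp
  simp only [key, h0]
  have hc : Continuous fun ε : ℝ => ∑ i ∈ s, ((i + ε) * Real.log (i + ε)) * φ (e i) :=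
    continuous_finsetSum _ fun i _ =>
      (Real.continuous_mul_log.comp (continuous_const.add continuous_id)).mul continuous_const
  exact (hc.tendsto 0).mono_left nhdsWithin_le_nhds

end Regularisation

/-! ### Strong subadditivity -/

/-- **strong subadditivity of adjusted entropy.** Let `M, N₁, N₂, P` be finite
type I factors forming a commuting square: `M ⊇ N₁, N₂ ⊇ P` and
`E₁ ∘ E₂ = E₂ ∘ E₁ = EP` for the `τ`-preserving conditional expectations.  Then for any state
`ψ` on `M`, with adjusted density matrices `ρ, ρ₁, ρ₂, ρP` of `ψ` and of its restrictions to
`N₁, N₂, P`, the adjusted entropies satisfy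
`Ŝ(ψ) − Ŝ(ψ|_{N₁}) − Ŝ(ψ|_{N₂}) + Ŝ(ψ|_P) ≤ 0`. -/
theorem strong_subadditivity_of_adjusted_entropy
    {M : Type*} [CStarAlgebra M] [PartialOrder M] [StarOrderedRing M]
    [FiniteDimensional ℂ M]
    (τ : M →L[ℂ] ℂ)
    (hτ1 : τ 1 = 1)
    (hτpos : ∀ x : M, 0 ≤ τ (star x * x))
    (hτtracial : ∀ x y : M, τ (x * y) = τ (y * x))
    (hτfaithful : ∀ x : M, τ (star x * x) = 0 → x = 0)
    (N₁ N₂ P : StarSubalgebra ℂ M)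
    (hPN₁ : P ≤ N₁) (hPN₂ : P ≤ N₂)
    (E₁ E₂ EP : M → M)
    (hE₁mem : ∀ x : M, E₁ x ∈ N₁)
    (hE₁τ : ∀ x : M, ∀ b ∈ N₁, τ (x * b) = τ (E₁ x * b))
    (hE₂mem : ∀ x : M, E₂ x ∈ N₂)
    (hE₂τ : ∀ x : M, ∀ b ∈ N₂, τ (x * b) = τ (E₂ x * b))
    (hEPmem : ∀ x : M, EP x ∈ P)
    (hEPτ : ∀ x : M, ∀ b ∈ P, τ (x * b) = τ (EP x * b))
    -- the commuting square condition
    (hsquare : ∀ x : M, E₁ (E₂ x) = EP x ∧ E₂ (E₁ x) = EP x)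
    -- `ψ` is a state on `M`
    (ψ : M →L[ℂ] ℂ)
    (hψ1 : ψ 1 = 1)
    (hψpos : ∀ x : M, 0 ≤ ψ (star x * x))
    -- adjusted density matrices of `ψ` and of its restrictions to `N₁`, `N₂`, `P`
    (ρ ρ₁ ρ₂ ρP : M)
    (hρpos : 0 ≤ ρ) (hρ₁pos : 0 ≤ ρ₁) (hρ₂pos : 0 ≤ ρ₂) (hρPpos : 0 ≤ ρP)
    (hρ : ∀ x : M, ψ x = τ (ρ * x))
    (hρ₁mem : ρ₁ ∈ N₁) (hρ₁ : ∀ b ∈ N₁, ψ b = τ (ρ₁ * b))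
    (hρ₂mem : ρ₂ ∈ N₂) (hρ₂ : ∀ b ∈ N₂, ψ b = τ (ρ₂ * b))
    (hρPmem : ρP ∈ P) (hρP : ∀ b ∈ P, ψ b = τ (ρP * b)) :
    adjustedEntropy τ ρ - adjustedEntropy τ ρ₁ - adjustedEntropy τ ρ₂
      + adjustedEntropy τ ρP ≤ 0 := by
  -- all entropies are real parts, so the argument runs with the real trace `φ = Re τ`
  let φ : M →ₗ[ℝ] ℝ := Complex.reLm ∘ₗ (τ.toLinearMap.restrictScalars ℝ)
  have hφ : ∀ x, φ x = (τ x).re := fun x => rfl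
  have htr : ∀ x y, φ (x * y) = φ (y * x) := fun x y => by rw [hφ, hφ, hτtracial]
  have hpos : ∀ x, 0 ≤ φ (star x * x) := fun x => (Complex.le_def.1 (hτpos x)).1
  have hstar : ∀ x, φ (star x) = φ x := by
    intro x
    -- polarisation: `τ ((1 + i x)⋆ (1 + i x))` is real
    have h1 := (Complex.le_def.1 (hτpos (1 + Complex.I • x))).2
    have h2 := (Complex.le_def.1 (hτpos x)).2
    have h3 : star (1 + Complex.I • x) * (1 + Complex.I • x)
        = 1 + Complex.I • x - Complex.I • star x + star x * x := by
      simp only [star_add, star_one, star_smul, Complex.star_def, Complex.conj_I, add_mul,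
        mul_add, one_mul, mul_one, smul_mul_smul_comm, neg_mul, Complex.I_mul_I, neg_neg, one_smul,
        neg_smul]
      abel
    rw [h3] at h1
    simp [hτ1] at h1 h2
    rw [hφ, hφ]
    linarith
  have hρE1 : ∀ b ∈ N₁, φ (ρ * b) = φ (ρ₁ * b) := fun b hb => by
    rw [hφ, hφ, ← hρ, hρ₁ b hb]
  have hρE2 : ∀ b ∈ N₂, φ (ρ * b) = φ (ρ₂ * b) := fun b hb => by
    rw [hφ, hφ, ← hρ, hρ₂ b hb]
  have hρ2P : ∀ b ∈ P, φ (ρ₂ * b) = φ (ρP * b) := fun b hb => by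
    rw [hφ, hφ, ← hρ₂ b (hPN₂ hb), hρP b hb]
  -- faithfulness of `τ` identifies elements of a subalgebra from their pairings with it
  have huniq : ∀ (N : StarSubalgebra ℂ M) (x y : M), x ∈ N → y ∈ N →
      (∀ b ∈ N, τ (x * b) = τ (y * b)) → x = y := by
    intro N x y hx hy h
    refine sub_eq_zero.1 (hτfaithful _ ?_)
    rw [hτtracial, sub_mul, map_sub, h _ (star_mem (sub_mem hx hy)), sub_self]
  have hE1 : E₁ ρ = ρ₁ := huniq N₁ _ _ (hE₁mem ρ) hρ₁mem fun b hb => by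
    rw [← hE₁τ ρ b hb, ← hρ, hρ₁ b hb]
  have hEP : EP ρ = ρP := huniq P _ _ (hEPmem ρ) hρPmem fun b hb => by
    rw [← hEPτ ρ b hb, ← hρ, hρP b hb]
  have hE2 : E₂ ρ₁ = ρP := by rw [← hE1, (hsquare ρ).2, hEP]
  have hρ1P : ∀ b ∈ N₂, φ (ρ₁ * b) = φ (ρP * b) := fun b hb => by
    rw [hφ, hφ, hE₂τ ρ₁ b hb, hE2]
  have hshift : ∀ (N : StarSubalgebra ℂ M) (x y : M) (ε : ℝ),
      (∀ b ∈ N, φ (x * b) = φ (y * b)) →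
      ∀ b ∈ N, φ ((x + algebraMap ℝ M ε) * b) = φ ((y + algebraMap ℝ M ε) * b) := by
    intro N x y ε h b hb
    rw [add_mul, add_mul, map_add, map_add, h b hb]
  have hmem : ∀ (N : StarSubalgebra ℂ M) (x : M) (ε : ℝ), x ∈ N → x + algebraMap ℝ M ε ∈ N :=
    fun N x ε hx => add_mem hx (algebraMap_mem_real N ε)
  let F : M → ℝ → ℝ := fun a ε =>
    φ ((a + algebraMap ℝ M ε) * cfc Real.log (a + algebraMap ℝ M ε))
  have hineq : ∀ ε : ℝ, 0 < ε → F ρ₂ ε - F ρP ε ≤ F ρ ε - F ρ₁ ε := by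
    intro ε hε
    have hnn : ∀ a : M, 0 ≤ a → 0 ≤ a + algebraMap ℝ M ε := fun a ha =>
      add_nonneg ha (algebraMap_nonneg M hε.le)
    have h := relEntropy_mono φ htr hpos hstar N₂ (hnn ρ hρpos) (hnn ρ₁ hρ₁pos) (hnn ρ₂ hρ₂pos)
      (hnn ρP hρPpos) (spectrum_add_pos hρpos hε) (spectrum_add_pos hρ₁pos hε)
      (spectrum_add_pos hρ₂pos hε) (spectrum_add_pos hρPpos hε) (hmem N₂ _ ε hρ₂mem)
      (hmem N₂ _ ε (hPN₂ hρPmem)) (hshift N₂ _ _ ε hρE2) (hshift N₂ _ _ ε hρ1P)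
    rw [hshift P _ _ ε hρ2P _ (cfc_mem_starSubalgebra P Real.log (hmem P _ ε hρPmem)),
      hshift N₁ _ _ ε hρE1 _ (cfc_mem_starSubalgebra N₁ Real.log (hmem N₁ _ ε hρ₁mem))] at h
    exact h
  have hlim := le_of_tendsto_of_tendsto
    ((tendsto_entropy φ hρ₂pos).sub (tendsto_entropy φ hρPpos))
    ((tendsto_entropy φ hρpos).sub (tendsto_entropy φ hρ₁pos))
    (eventually_nhdsWithin_of_forall fun ε hε => hineq ε hε)
  simp only [hφ] at hlim
  simp only [adjustedEntropy]
  linarith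
end

section
/- In the CAR algebra A over Z^ν, if {I_α} is an increasing net of subsets of a subset I whose union is I, then for every a ∈ A, E_{I_α}(a) converges in norm to E_I(a). More generally, if a net {I_α} of subsets converges to I (in the sense that limsup I_α = liminf I_α = I) then lim_α E_{I_α}(a) = E_I(a) for all a ∈ A. -/
/-!
Pass to the Majorana generators `a i + (a i)*` and `√-1 (a i - (a i)*)`: self-adjoint unitaries,
pairwise anticommuting, two for each site.  Products of words without repeated letters span a
dense subspace of `A`, and words over a region `J` span a dense subspace of `A(J)`.
A word in which some letter has odd multiplicity anticommutes with one of the generators, so its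
trace vanishes (`trace_majorana_word`).  Consequently, on a repetition-free word the conditional
expectation onto `A(J)` is the identity if all letters sit in `J`, and zero otherwise
(`trace_word_mul_eq_zero`).  Along a net of regions converging to `I`, membership of each of
the finitely many sites of a word is eventually decided as in `I`, so the net of expectations of
the word is eventually constant.

The convergence extends to all of `A` because the conditional expectations are contractive
(`norm_le_of_trace_eq`), and they are linear since `τ` is faithful (`eq_of_trace_eq`).
-/

open scoped ComplexOrder

/-- The C*-subalgebra `A(I)` of the CAR algebra associated to a region `I ⊆ ℤ^ν`. -/
noncomputable def carSub {ν : ℕ} {A : Type*} [CStarAlgebra A]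
    (a : (Fin ν → ℤ) → A) (I : Set (Fin ν → ℤ)) : StarSubalgebra ℂ A :=
  (StarAlgebra.adjoin ℂ (a '' I)).topologicalClosure

/-- `E` is the `τ`-preserving conditional expectation of the CAR algebra onto `A(I)`. -/
def IsCondExp {ν : ℕ} {A : Type*} [CStarAlgebra A]
    (a : (Fin ν → ℤ) → A) (τ : A →L[ℂ] ℂ) (I : Set (Fin ν → ℤ)) (E : A → A) : Prop :=
  (∀ x : A, E x ∈ carSub a I) ∧ ∀ x : A, ∀ b ∈ carSub a I, τ (x * b) = τ (E x * b)

/-! ### Expectations preserving a faithful trace -/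

/-- Positive functionals are Hermitian, by polarization. -/
theorem trace_star {A : Type*} [CStarAlgebra A] (τ : A →L[ℂ] ℂ)
    (hpos : ∀ x : A, 0 ≤ τ (star x * x)) (z : A) : τ (star z) = star (τ z) := by
  have im0 : ∀ x : A, (τ (star x * x)).im = 0 := fun x => (Complex.le_def.mp (hpos x)).2.symm
  have h0 := im0 1
  have h1 := im0 z
  have h2 := im0 (1 + z)
  have h3 := im0 (1 + Complex.I • z)
  simp only [star_add, star_one, star_smul, add_mul, mul_add, one_mul, mul_one, map_add,
    smul_mul_assoc, mul_smul_comm, map_smul, Complex.add_im, smul_eq_mul, Complex.mul_im,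
    Complex.mul_re, Complex.I_re, Complex.I_im, Complex.star_def, Complex.conj_I, Complex.neg_re,
    Complex.neg_im] at h0 h1 h2 h3
  apply Complex.ext <;> simp <;> linarith

/-- Conditional expectations preserving a faithful positive trace are contractive.  The element
`h = ‖x‖² - y* y` satisfies `τ (b h b) ≥ 0` for every self-adjoint `b` in the subalgebra; taking
for `b` the negative part of `h` shows that `h` is positive. -/
theorem norm_le_of_trace_eq {A : Type*} [CStarAlgebra A] (τ : A →L[ℂ] ℂ)
    (hpos : ∀ x : A, 0 ≤ τ (star x * x)) (htr : ∀ x y : A, τ (x * y) = τ (y * x))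
    (hfaith : ∀ x : A, τ (star x * x) = 0 → x = 0)
    (B : StarSubalgebra ℂ A) (hB : IsClosed (B : Set A)) {x y : A} (hy : y ∈ B)
    (hxy : ∀ b ∈ B, τ (x * b) = τ (y * b)) : ‖y‖ ≤ ‖x‖ := by
  let _ := CStarAlgebra.spectralOrder A
  have := CStarAlgebra.spectralOrderedRing A
  set h : A := algebraMap ℝ A (‖x‖ ^ 2) - star y * y with hh
  have hsa : IsSelfAdjoint h := by
    apply IsSelfAdjoint.sub
    · exact (IsSelfAdjoint.all (‖x‖ ^ 2)).algebraMap A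
    · exact IsSelfAdjoint.star_mul_self y
  have hhB : h ∈ B := by
    refine sub_mem ?_ (mul_mem (star_mem hy) hy)
    rw [IsScalarTower.algebraMap_apply ℝ ℂ A]
    exact B.algebraMap_mem _
  have hmB : h⁻ ∈ B := by
    rw [CFC.negPart_def]
    exact cfcₙ_mem (hs := hB) _ hhB
  have hm0 : 0 ≤ h⁻ := CFC.negPart_nonneg h
  have hmsa : star (h⁻) = h⁻ := hm0.isSelfAdjoint.star_eq
  set m := h⁻ with hm
  have e1 : h * m = -(m * m) := by
    conv_lhs => rw [← CFC.posPart_sub_negPart h hsa]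
    rw [sub_mul, CFC.posPart_mul_negPart, zero_sub]
  obtain ⟨s, hs⟩ := CStarAlgebra.nonneg_iff_eq_star_mul_self.mp
    (sub_nonneg.mpr (CStarAlgebra.star_mul_le_algebraMap_norm_sq (a := x)))
  obtain ⟨t, ht⟩ := CStarAlgebra.nonneg_iff_eq_star_mul_self.mp hm0
  have c1 : τ (m * star y * x * m) = τ (m * star y * y * m) := by
    have := hxy (m * m * star y) (mul_mem (mul_mem hmB hmB) (star_mem hy))
    have r : ∀ z : A, τ (m * star y * z * m) = τ (z * (m * m * star y)) := fun z => by
      rw [htr, ← htr (m * m * star y)]; simp only [mul_assoc]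
    rw [r, r, this]
  have c2 : τ (m * star x * y * m) = τ (m * star y * y * m) := by
    have e := congrArg star c1
    rw [← trace_star τ hpos, ← trace_star τ hpos] at e
    simpa [hmsa, mul_assoc] using e
  have key : 0 ≤ τ (m * h * m) := by
    have p1 := hpos (s * m)
    have p2 := hpos ((x - y) * m)
    have : m * h * m = star (s * m) * (s * m) + star ((x - y) * m) * ((x - y) * m)
        + (m * star x * y * m + m * star y * x * m - m * star y * y * m - m * star y * y * m) := by
      have : star (s * m) * (s * m) = m * (star s * s) * m := by
        simp only [star_mul, hmsa, mul_assoc]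
      rw [this, ← hs, hh]
      simp only [star_mul, star_sub, hmsa]
      noncomm_ring
    rw [this, map_add, map_add, map_sub, map_sub, map_add, c1, c2]
    have := add_nonneg p1 p2
    convert this using 1
    ring
  have hk2 : τ (star (t * m) * (t * m)) = 0 := by
    apply le_antisymm _ (hpos _)
    have : m * h * m = -(star (t * m) * (t * m)) := by
      rw [mul_assoc, e1, star_mul, hmsa, mul_neg, mul_assoc, ← mul_assoc (star t), ← ht]
    rw [this, map_neg] at key
    exact neg_nonneg.mp key
  have htm := hfaith _ hk2
  have hmm : star m * m = 0 := by
    rw [hmsa]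
    nth_rw 1 [ht]
    rw [mul_assoc, htm, mul_zero]
  have hmz : m = 0 := by simpa using hmm
  have hnn : 0 ≤ h := (CFC.negPart_eq_zero_iff h hsa).mp hmz
  have hle := (CStarAlgebra.norm_le_iff_le_algebraMap (star y * y) (by positivity)
    (star_mul_self_nonneg y)).mpr (sub_nonneg.mp hnn)
  rw [CStarRing.norm_star_mul_self, ← sq] at hle
  exact (sq_le_sq₀ (norm_nonneg _) (norm_nonneg _)).mp hle

/-- Uniqueness of the `τ`-preserving conditional expectation. -/
theorem eq_of_trace_eq {A : Type*} [CStarAlgebra A] (τ : A →L[ℂ] ℂ)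
    (htr : ∀ x y : A, τ (x * y) = τ (y * x))
    (hfaith : ∀ x : A, τ (star x * x) = 0 → x = 0)
    (B : StarSubalgebra ℂ A) {y z : A} (hy : y ∈ B) (hz : z ∈ B)
    (hyz : ∀ b ∈ B, τ (y * b) = τ (z * b)) : y = z := by
  rw [← sub_eq_zero]
  apply hfaith
  rw [htr, sub_mul, map_sub, hyz _ (star_mem (sub_mem hy hz)), sub_self]

/-! ### Words in anticommuting self-adjoint unitaries -/

section words

variable {A L : Type*} [CStarAlgebra A] (g : L → A)

/-- The ordered product of the generators `g l` along a word in the letters `l`. -/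
def wordProd (w : List L) : A := (w.map g).prod

@[simp] theorem wordProd_nil : wordProd g [] = 1 := rfl

@[simp] theorem wordProd_cons (l : L) (w : List L) :
    wordProd g (l :: w) = g l * wordProd g w := by simp [wordProd]

@[simp] theorem wordProd_append (v w : List L) :
    wordProd g (v ++ w) = wordProd g v * wordProd g w := by simp [wordProd]

theorem wordProd_mem (B : StarSubalgebra ℂ A) (w : List L) (h : ∀ l ∈ w, g l ∈ B) :
    wordProd g w ∈ B := by
  apply list_prod_mem
  simpa using h

variable {g} [BEq L] [LawfulBEq L]

theorem gen_mul_wordProd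
    (hanti : ∀ l k, l ≠ k → g l * g k = -(g k * g l)) (l : L) (w : List L) :
    g l * wordProd g w = (-1 : ℂ) ^ (w.length + w.count l) • (wordProd g w * g l) := by
  induction w with
  | nil => simp
  | cons k w ih =>
    rw [wordProd_cons]
    by_cases h : l = k
    · subst h
      rw [mul_assoc, ih, mul_smul_comm, List.length_cons, List.count_cons_self]
      congr 1
      ring
    · rw [← mul_assoc, hanti l k h, neg_mul, mul_assoc, ih, mul_smul_comm, List.length_cons,
        List.count_cons_of_ne (Ne.symm h), ← mul_assoc, ← neg_smul]
      congr 1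
      ring

/-- The parity hypothesis says that `g l` anticommutes with the word; conjugation by the unitary
`g l` then changes the sign of its trace. -/
theorem trace_wordProd_eq_zero_of_odd (hsq : ∀ l, g l * g l = 1)
    (hanti : ∀ l k, l ≠ k → g l * g k = -(g k * g l))
    (τ : A →L[ℂ] ℂ) (htr : ∀ x y : A, τ (x * y) = τ (y * x)) (l : L) (w : List L)
    (hodd : Odd (w.length + w.count l)) : τ (wordProd g w) = 0 := by
  have h := gen_mul_wordProd hanti l w
  rw [hodd.neg_one_pow, neg_one_smul] at h
  have e : τ (g l * (g l * wordProd g w)) = τ (wordProd g w) := by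
    rw [← mul_assoc, hsq, one_mul]
  rw [h, mul_neg, map_neg, htr, mul_assoc, hsq, mul_one] at e
  exact self_eq_neg.mp e.symm

/-- Up to sign, every word product is the product of a word without repeated letters. -/
theorem exists_nodup_wordProd (hsq : ∀ l, g l * g l = 1)
    (hanti : ∀ l k, l ≠ k → g l * g k = -(g k * g l)) (w : List L) :
    ∃ v : List L, v.Nodup ∧ ∃ s : ℂ, wordProd g w = s • wordProd g v := by
  induction w with
  | nil => exact ⟨[], List.nodup_nil, 1, by simp⟩
  | cons l w ih =>
    obtain ⟨v, hv, s, hs⟩ := ih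
    by_cases hl : l ∈ v
    · obtain ⟨p, q, rfl⟩ := List.append_of_mem hl
      refine ⟨p ++ q, hv.sublist (by simp), s * (-1 : ℂ) ^ (p.length + p.count l), ?_⟩
      rw [wordProd_cons, hs, wordProd_append, wordProd_cons, mul_smul_comm, ← mul_assoc,
        gen_mul_wordProd hanti, smul_mul_assoc, mul_assoc, ← mul_assoc (g l), hsq, one_mul,
        smul_smul, wordProd_append]
    · exact ⟨l :: v, List.nodup_cons.mpr ⟨hl, hv⟩, s, by simp [hs]⟩

end words

/-- The span of the products of words over `S` is closed under multiplication (concatenate words)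
and under the adjoint (reverse words), so if it contains `T`, then its closure contains the closed
star subalgebra generated by `T`. -/
theorem mem_closure_span_wordProd {A L : Type*} [CStarAlgebra A] (g : L → A)
    (hsa : ∀ l, star (g l) = g l) (S : Set L) (T : Set A)
    (hT : ∀ x ∈ T, x ∈ Submodule.span ℂ (wordProd g '' {w | ∀ l ∈ w, l ∈ S})) {x : A}
    (hx : x ∈ (StarAlgebra.adjoin ℂ T).topologicalClosure) :
    x ∈ closure (Submodule.span ℂ (wordProd g '' {w | ∀ l ∈ w, l ∈ S}) : Set A) := by
  rw [← SetLike.mem_coe, StarSubalgebra.topologicalClosure_coe] at hx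
  refine closure_mono ?_ hx
  have hrev : ∀ w : List L, wordProd g w.reverse = star (wordProd g w) := fun w => by
    induction w with
    | nil => simp
    | cons l w ih => simp [ih, hsa]
  have hstar : ∀ x ∈ Submodule.span ℂ (wordProd g '' {w | ∀ l ∈ w, l ∈ S}),
      star x ∈ Submodule.span ℂ (wordProd g '' {w | ∀ l ∈ w, l ∈ S}) := by
    intro x hx
    induction hx using Submodule.span_induction with
    | mem x h =>
      obtain ⟨w, hw, rfl⟩ := h
      exact Submodule.subset_span
        ⟨w.reverse, fun l hl => hw l (List.mem_reverse.mp hl), hrev w⟩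
    | zero => simp
    | add x y _ _ hx hy => rw [star_add]; exact add_mem hx hy
    | smul r x _ hx => rw [star_smul]; exact Submodule.smul_mem _ _ hx
  intro x hx
  rw [SetLike.mem_coe] at hx ⊢
  induction hx using StarAlgebra.adjoin_induction with
  | mem x h => exact hT x h
  | algebraMap r =>
    rw [Algebra.algebraMap_eq_smul_one]
    exact Submodule.smul_mem _ _ (Submodule.subset_span ⟨[], by simp, rfl⟩)
  | add x y _ _ hx hy => exact add_mem hx hy
  | mul x y _ _ hx hy =>
    have := Submodule.mul_mem_mul hx hy
    rw [Submodule.span_mul_span] at this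
    refine Submodule.span_mono ?_ this
    rintro _ ⟨_, ⟨v, hv, rfl⟩, _, ⟨w, hw, rfl⟩, rfl⟩
    refine ⟨v ++ w, ?_, by simp⟩
    intro l hl
    rcases List.mem_append.mp hl with h | h
    exacts [hv l h, hw l h]
  | star x _ hx => exact hstar x hx

/-! ### Majorana generators of the CAR algebra -/

/-- The Majorana (self-adjoint) generators `a i + (a i)*` and `√-1 (a i - (a i)*)` attached to the
site `i`; the Boolean selects which of the two. -/
noncomputable def majorana {A ι : Type*} [CStarAlgebra A] (a : ι → A) : ι × Bool → A
  | (i, true) => a i + star (a i)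
  | (i, false) => Complex.I • (a i - star (a i))

section majorana

variable {A ι : Type*} [CStarAlgebra A] (a : ι → A)

theorem star_majorana (l : ι × Bool) : star (majorana a l) = majorana a l := by
  rcases l with ⟨i, _ | _⟩
  · simp only [majorana, star_smul, star_sub, star_star, Complex.star_def, Complex.conj_I, neg_smul,
      ← smul_neg, neg_sub]
  · simp [majorana, add_comm]

theorem eq_zero_of_eq_neg_self {x : A} (h : x = -x) : x = 0 := by
  have h2 : (2 : ℂ) • x = 0 := by rw [two_smul]; nth_rw 1 [h]; exact neg_add_cancel x
  exact (smul_eq_zero.mp h2).resolve_left two_ne_zero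

theorem majorana_sq (hCAR₁ : ∀ i, star (a i) * a i + a i * star (a i) = 1)
    (hCAR₂ : ∀ i, a i * a i + a i * a i = 0) (l : ι × Bool) :
    majorana a l * majorana a l = 1 := by
  obtain ⟨i, b⟩ := l
  have h1 := hCAR₁ i
  have h2 : a i * a i = 0 := eq_zero_of_eq_neg_self (eq_neg_of_add_eq_zero_left (hCAR₂ i))
  have h3 : star (a i) * star (a i) = 0 := by rw [← star_mul, h2, star_zero]
  rcases b with _ | _
  · simp only [majorana, smul_mul_assoc, mul_smul_comm, smul_smul, Complex.I_mul_I, sub_mul,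
      mul_sub, h2, h3, smul_sub, neg_smul, one_smul]
    rw [← h1]; simp
  · simp only [majorana, add_mul, mul_add, h2, h3]
    rw [← h1]; abel

theorem majorana_anti [DecidableEq ι]
    (hCAR₁ : ∀ i j, star (a i) * a j + a j * star (a i) = if i = j then (1 : A) else 0)
    (hCAR₂ : ∀ i j, a i * a j + a j * a i = 0) (l k : ι × Bool) (hlk : l ≠ k) :
    majorana a l * majorana a k = -(majorana a k * majorana a l) := by
  have h3 : ∀ i j, star (a i) * star (a j) = -(star (a j) * star (a i)) := fun i j => by
    rw [← star_mul, ← star_mul, ← star_neg]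
    exact congrArg star (eq_neg_of_add_eq_zero_left (hCAR₂ j i))
  have h2 : ∀ i j, a i * a j = -(a j * a i) := fun i j => eq_neg_of_add_eq_zero_left (hCAR₂ i j)
  have h1 : ∀ i j, star (a i) * a j = (if i = j then (1 : A) else 0) - a j * star (a i) :=
    fun i j => eq_sub_of_add_eq (hCAR₁ i j)
  rcases l with ⟨i, b⟩
  rcases k with ⟨j, c⟩
  have d : ∀ i : ι, a i * a i = 0 := fun i => eq_zero_of_eq_neg_self (h2 i i)
  have d' : ∀ i : ι, star (a i) * star (a i) = 0 := fun i => eq_zero_of_eq_neg_self (h3 i i)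
  by_cases hij : i = j
  · subst hij
    rcases b with _ | _ <;> rcases c with _ | _
    · exact absurd rfl hlk
    · simp only [majorana, smul_mul_assoc, mul_smul_comm, sub_mul, mul_sub, add_mul, mul_add, d, d']
      module
    · simp only [majorana, smul_mul_assoc, mul_smul_comm, sub_mul, mul_sub, add_mul, mul_add, d, d']
      module
    · exact absurd rfl hlk
  · have m1 : star (a i) * a j = -(a j * star (a i)) := by rw [h1, if_neg hij, zero_sub]
    have m2 : star (a j) * a i = -(a i * star (a j)) := by
      rw [h1, if_neg (Ne.symm hij), zero_sub]
    rcases b with _ | _ <;> rcases c with _ | _ <;>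
    · simp only [majorana, smul_mul_assoc, mul_smul_comm, sub_mul, mul_sub, add_mul, mul_add, m1,
        m2, h2 i j, h3 i j]
      module

/-- A word in Majorana generators in which some letter occurs an odd number of times has vanishing
trace.  For words of even length that letter anticommutes with the word; for words of odd
length a letter occurring an even number of times does, and one exists since the letters come in
pairs. -/
theorem trace_majorana_word {A ι : Type*} [CStarAlgebra A] (a : ι → A) [DecidableEq ι]
    (hCAR₁ : ∀ i j, star (a i) * a j + a j * star (a i) = if i = j then (1 : A) else 0)
    (hCAR₂ : ∀ i j, a i * a j + a j * a i = 0)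
    (τ : A →L[ℂ] ℂ) (htr : ∀ x y : A, τ (x * y) = τ (y * x)) (w : List (ι × Bool))
    (l : ι × Bool) (hl : Odd (w.count l)) : τ (wordProd (majorana a) w) = 0 := by
  have hsq := majorana_sq a (fun i => by simpa using hCAR₁ i i) (fun i => hCAR₂ i i)
  have hanti := majorana_anti a hCAR₁ hCAR₂
  rcases Nat.even_or_odd w.length with he | ho
  · exact trace_wordProd_eq_zero_of_odd hsq hanti τ htr l w (he.add_odd hl)
  · obtain ⟨k, hk⟩ : ∃ k, Even (w.count k) := by
      by_contra! hne
      apply Nat.not_even_iff_odd.mpr ho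
      have hmem : ∀ k, k ∈ w := fun k => by
        by_contra hkw
        exact hne k (by simp [List.count_eq_zero_of_not_mem hkw])
      have : Fintype ι := ⟨w.toFinset.image Prod.fst, fun i => Finset.mem_image.mpr
        ⟨(i, true), List.mem_toFinset.mpr (hmem _), rfl⟩⟩
      have hc : ∀ k, Multiset.count k (w : Multiset (ι × Bool)) = w.count k := fun k => by
        rw [Multiset.coe_count]
        congr 1
        exact lawful_beq_subsingleton _ _
      rw [← Multiset.coe_card, ← Multiset.sum_count_eq_card (s := Finset.univ) (by simp),
        Fintype.sum_prod_type]
      refine Finset.even_sum _ fun i _ => ?_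
      rw [Fintype.sum_bool]
      simp only [hc]
      exact (Nat.not_even_iff_odd.mp (hne _)).add_odd (Nat.not_even_iff_odd.mp (hne _))
    exact trace_wordProd_eq_zero_of_odd hsq hanti τ htr k w (ho.add_even hk)

theorem generator_mem_span {S : Set ι} {i : ι} (hi : i ∈ S) :
    a i ∈ Submodule.span ℂ
      (wordProd (majorana a) '' {w | ∀ l ∈ w, l ∈ {l : ι × Bool | l.1 ∈ S}}) := by
  have h : ∀ b, majorana a (i, b) ∈ Submodule.span ℂ
      (wordProd (majorana a) '' {w | ∀ l ∈ w, l ∈ {l : ι × Bool | l.1 ∈ S}}) := fun b =>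
    Submodule.subset_span ⟨[(i, b)], by
      intro l hl
      rw [List.mem_singleton.mp hl]
      exact hi, by simp⟩
  have e : a i = (1 / 2 : ℂ) • majorana a (i, true) + (-Complex.I / 2) • majorana a (i, false) := by
    simp only [majorana, smul_smul]
    have : -Complex.I / 2 * Complex.I = 1 / 2 := by
      rw [div_mul_eq_mul_div, neg_mul, Complex.I_mul_I, neg_neg]
    rw [this, ← smul_add]
    module
  rw [e]
  exact add_mem (Submodule.smul_mem _ _ (h _)) (Submodule.smul_mem _ _ (h _))

end majorana

/-! ### Conditional expectations -/

section condexp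

variable {ν : ℕ} {A : Type*} [CStarAlgebra A] {a : (Fin ν → ℤ) → A}

theorem majorana_mem_carSub {J : Set (Fin ν → ℤ)} {l : (Fin ν → ℤ) × Bool} (hl : l.1 ∈ J) :
    majorana a l ∈ carSub a J := by
  have h : a l.1 ∈ carSub a J := (StarAlgebra.adjoin ℂ (a '' J)).le_topologicalClosure
    (StarAlgebra.subset_adjoin ℂ _ ⟨l.1, hl, rfl⟩)
  rcases l with ⟨i, _ | _⟩
  · exact SMulMemClass.smul_mem _ (sub_mem h (star_mem h))
  · exact add_mem h (star_mem h)

/-- The trace pairs a word without repetitions trivially with `A(J)` as soon as one of its letters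
sits outside `J`: multiplying by a word over `J` leaves the multiplicity of that letter equal to
one. -/
theorem trace_word_mul_eq_zero
    (hCAR₁ : ∀ i j, star (a i) * a j + a j * star (a i) = if i = j then (1 : A) else 0)
    (hCAR₂ : ∀ i j, a i * a j + a j * a i = 0)
    (τ : A →L[ℂ] ℂ) (htr : ∀ x y : A, τ (x * y) = τ (y * x))
    {J : Set (Fin ν → ℤ)} {w : List ((Fin ν → ℤ) × Bool)} (hw : w.Nodup)
    {l : (Fin ν → ℤ) × Bool} (hl : l ∈ w) (hlJ : l.1 ∉ J) {b : A} (hb : b ∈ carSub a J) :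
    τ (wordProd (majorana a) w * b) = 0 := by
  have hb' := mem_closure_span_wordProd (majorana a) (star_majorana a)
    {l : (Fin ν → ℤ) × Bool | l.1 ∈ J} (a '' J)
    (by rintro _ ⟨i, hi, rfl⟩; exact generator_mem_span a hi) hb
  have hcl : IsClosed {b : A | τ (wordProd (majorana a) w * b) = 0} :=
    isClosed_eq (by fun_prop) continuous_const
  refine closure_minimal ?_ hcl hb'
  intro b hb
  rw [SetLike.mem_coe] at hb
  rw [Set.mem_ofPred_eq]
  induction hb using Submodule.span_induction with
  | mem b h =>
    obtain ⟨v, hv, rfl⟩ := h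
    rw [← wordProd_append]
    refine trace_majorana_word a hCAR₁ hCAR₂ τ htr _ l ?_
    rw [List.count_append, List.count_eq_one_of_mem hw hl,
      List.count_eq_zero_of_not_mem fun h => hlJ (hv l h)]
    exact odd_one
  | zero => simp
  | add x y _ _ hx hy => rw [mul_add, map_add, hx, hy, add_zero]
  | smul r x _ hx => rw [mul_smul_comm, map_smul, hx, smul_zero]

end condexp

/-- Convergence of the conditional expectations along a net of regions that eventually decides
the membership of each site. -/
theorem tendsto_condExp_of_eventually_mem_iff
    {ν : ℕ} {A : Type*} [CStarAlgebra A]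
    (a : (Fin ν → ℤ) → A)
    (hCAR₁ : ∀ i j, star (a i) * a j + a j * star (a i) = if i = j then (1 : A) else 0)
    (hCAR₂ : ∀ i j, a i * a j + a j * a i = 0)
    (hgen : carSub a Set.univ = ⊤)
    (τ : A →L[ℂ] ℂ)
    (hτpos : ∀ x : A, 0 ≤ τ (star x * x))
    (hτtracial : ∀ x y : A, τ (x * y) = τ (y * x))
    (hτfaithful : ∀ x : A, τ (star x * x) = 0 → x = 0)
    (E : Set (Fin ν → ℤ) → A → A)
    (hE : ∀ I : Set (Fin ν → ℤ), IsCondExp a τ I (E I))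
    {κ : Type*} (F : Filter κ) (I' : κ → Set (Fin ν → ℤ)) (I : Set (Fin ν → ℤ))
    (hI : ∀ i, ∀ᶠ α in F, (i ∈ I' α ↔ i ∈ I)) (x : A) :
    Filter.Tendsto (fun α => E (I' α) x) F (nhds (E I x)) := by
  have huniq : ∀ (J : Set (Fin ν → ℤ)) {x y : A}, y ∈ carSub a J →
      (∀ b ∈ carSub a J, τ (x * b) = τ (y * b)) → E J x = y := fun J x y hy h =>
    eq_of_trace_eq τ hτtracial hτfaithful (carSub a J) ((hE J).1 x) hy
      fun b hb => ((hE J).2 x b hb).symm.trans (h b hb)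
  have hadd : ∀ (J : Set (Fin ν → ℤ)) (x y : A), E J (x + y) = E J x + E J y := fun J x y => by
    refine huniq J (add_mem ((hE J).1 x) ((hE J).1 y)) fun b hb => ?_
    rw [add_mul, add_mul, map_add, map_add, (hE J).2 x b hb, (hE J).2 y b hb]
  have hsmul : ∀ (J : Set (Fin ν → ℤ)) (r : ℂ) (x : A), E J (r • x) = r • E J x := fun J r x => by
    refine huniq J (SMulMemClass.smul_mem r ((hE J).1 x)) fun b hb => ?_
    rw [smul_mul_assoc, smul_mul_assoc, map_smul, map_smul, (hE J).2 x b hb]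
  have hnorm : ∀ (J : Set (Fin ν → ℤ)) (x : A), ‖E J x‖ ≤ ‖x‖ := fun J x =>
    norm_le_of_trace_eq τ hτpos hτtracial hτfaithful (carSub a J)
      (StarSubalgebra.isClosed_topologicalClosure _) ((hE J).1 x) ((hE J).2 x)
  have hsub : ∀ (J : Set (Fin ν → ℤ)) (x y : A), E J x - E J y = E J (x - y) := fun J x y => by
    rw [sub_eq_iff_eq_add, ← hadd, sub_add_cancel]
  have hword_in : ∀ (J : Set (Fin ν → ℤ)) (w : List ((Fin ν → ℤ) × Bool)), (∀ l ∈ w, l.1 ∈ J) →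
      E J (wordProd (majorana a) w) = wordProd (majorana a) w := fun J w h =>
    huniq J (wordProd_mem _ _ _ fun l hl => majorana_mem_carSub (h l hl)) fun _ _ => rfl
  have hword_out : ∀ (J : Set (Fin ν → ℤ)) (w : List ((Fin ν → ℤ) × Bool)), w.Nodup →
      ∀ l ∈ w, l.1 ∉ J → E J (wordProd (majorana a) w) = 0 := fun J w hw l hl hlJ =>
    huniq J (zero_mem _) fun b hb => by
      rw [trace_word_mul_eq_zero hCAR₁ hCAR₂ τ hτtracial hw hl hlJ hb, zero_mul, map_zero]
  have hx : x ∈ carSub a Set.univ := hgen ▸ StarSubalgebra.mem_top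
  have hx' := mem_closure_span_wordProd (majorana a) (star_majorana a)
    {l : (Fin ν → ℤ) × Bool | l.1 ∈ Set.univ} (a '' Set.univ)
    (by rintro _ ⟨i, hi, rfl⟩; exact generator_mem_span a hi) hx
  have hdense : ∀ y ∈ Submodule.span ℂ (wordProd (majorana a) ''
      {w | ∀ l ∈ w, l ∈ {l : (Fin ν → ℤ) × Bool | l.1 ∈ Set.univ}}),
      Filter.Tendsto (fun α => E (I' α) y) F (nhds (E I y)) := by
    intro y hy
    induction hy using Submodule.span_induction with
    | mem y h =>
      obtain ⟨w, -, rfl⟩ := h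
      obtain ⟨v, hv, s, hs⟩ := exists_nodup_wordProd
        (majorana_sq a (fun i => by simpa using hCAR₁ i i) (fun i => hCAR₂ i i))
        (majorana_anti a hCAR₁ hCAR₂) w
      rw [hs]
      simp only [hsmul]
      refine Filter.Tendsto.const_smul ?_ s
      -- The net of expectations of a repetition-free word is eventually constant.
      apply tendsto_nhds_of_eventually_eq
      by_cases hvI : ∀ l ∈ v, l.1 ∈ I
      · have hev : ∀ᶠ α in F, ∀ l ∈ v.toFinset, l.1 ∈ I' α :=
          (Filter.eventually_all_finset _).mpr fun l hl =>
            (hI l.1).mono fun α h => h.mpr (hvI l (List.mem_toFinset.mp hl))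
        filter_upwards [hev] with α hα
        rw [hword_in I v hvI, hword_in _ v fun l hl => hα l (List.mem_toFinset.mpr hl)]
      · push Not at hvI
        obtain ⟨l, hl, hlI⟩ := hvI
        filter_upwards [hI l.1] with α hα
        rw [hword_out I v hv l hl hlI, hword_out _ v hv l hl (mt hα.mp hlI)]
    | zero =>
      have h0 : ∀ J, E J 0 = 0 := fun J => by simpa using hsmul J 0 0
      simp only [h0]
      exact tendsto_const_nhds
    | add x y _ _ hx hy =>
      simp only [hadd]
      exact hx.add hy
    | smul r x _ hx =>
      simp only [hsmul]
      exact hx.const_smul r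
  -- Contractivity of all the expectations extends the convergence from the dense subspace to `A`.
  rw [Metric.tendsto_nhds]
  intro ε hε
  obtain ⟨y, hy, hxy⟩ := Metric.mem_closure_iff.mp hx' (ε / 3) (by positivity)
  filter_upwards [Metric.tendsto_nhds.mp (hdense y hy) (ε / 3) (by positivity)] with α hα
  have hlip : ∀ J, dist (E J x) (E J y) < ε / 3 := fun J => by
    rw [dist_eq_norm, hsub]
    exact (hnorm J _).trans_lt (by rwa [← dist_eq_norm])
  have t1 := dist_triangle4 (E (I' α) x) (E (I' α) y) (E I y) (E I x)
  have t2 := hlip (I' α)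
  have t3 := hlip I
  rw [dist_comm] at t3
  linarith

/-- In the CAR algebra `A` over `ℤ^ν`, if `{I_α}` is an increasing net of
subsets of a subset `I` whose union is `I`, then `E_{I_α} x → E_I x` in norm for every
`x ∈ A`.  More generally, if a net `{I_α}` of subsets converges to `I` in the sense that
`limsup I_α = liminf I_α = I`, then `E_{I_α} x → E_I x` for all `x ∈ A`. -/
theorem car_conditional_expectation_net_convergence
    {ν : ℕ} {A : Type*} [CStarAlgebra A]
    (a : (Fin ν → ℤ) → A)
    (hCAR₁ : ∀ i j, star (a i) * a j + a j * star (a i) = if i = j then (1 : A) else 0)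
    (hCAR₂ : ∀ i j, a i * a j + a j * a i = 0)
    (hgen : carSub a Set.univ = ⊤)
    (τ : A →L[ℂ] ℂ)
    (hτ1 : τ 1 = 1)
    (hτpos : ∀ x : A, 0 ≤ τ (star x * x))
    (hτtracial : ∀ x y : A, τ (x * y) = τ (y * x))
    (hτfaithful : ∀ x : A, τ (star x * x) = 0 → x = 0)
    -- a family of conditional expectations, one for every region
    (E : Set (Fin ν → ℤ) → A → A)
    (hE : ∀ I : Set (Fin ν → ℤ), IsCondExp a τ I (E I))
    -- the directed index set of the net
    {κ : Type*} [Nonempty κ] [Preorder κ] [IsDirected κ (· ≤ ·)]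
    (I' : κ → Set (Fin ν → ℤ)) (I : Set (Fin ν → ℤ)) :
    -- (1) increasing nets with union `I`
    ((Monotone I' → (∀ α, I' α ⊆ I) → (⋃ α, I' α) = I →
      ∀ x : A, Filter.Tendsto (fun α => E (I' α) x) Filter.atTop (nhds (E I x)))) ∧
    -- (2) general nets converging to `I` (limsup = liminf = I)
    ((Filter.limsup I' Filter.atTop = I → Filter.liminf I' Filter.atTop = I →
      ∀ x : A, Filter.Tendsto (fun α => E (I' α) x) Filter.atTop (nhds (E I x)))) := by
  have main := fun h => tendsto_condExp_of_eventually_mem_iff a hCAR₁ hCAR₂ hgen τ hτpos hτtracial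
    hτfaithful E hE Filter.atTop I' I h
  refine ⟨fun hmono hsub hU => main fun i => ?_, fun hsup hinf => main fun i => ?_⟩
  · by_cases hi : i ∈ I
    · obtain ⟨β, hβ⟩ := Set.mem_iUnion.mp (hU ▸ hi)
      filter_upwards [Filter.eventually_ge_atTop β] with α hα
      exact iff_of_true (hmono hα hβ) hi
    · exact Filter.Eventually.of_forall fun α => iff_of_false (fun h => hi (hsub α h)) hi
  · by_cases hi : i ∈ I
    · have h : i ∈ Filter.liminf I' Filter.atTop := hinf ▸ hi
      rw [Filter.liminf_eq, Set.sSup_eq_sUnion] at h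
      obtain ⟨s, hs, his⟩ := h
      filter_upwards [hs] with α hα
      exact iff_of_true (hα his) hi
    · have h : i ∉ Filter.limsup I' Filter.atTop := hsup ▸ hi
      rw [Filter.limsup_eq, Set.sInf_eq_sInter, Set.mem_sInter] at h
      push Not at h
      obtain ⟨s, hs, his⟩ := h
      filter_upwards [hs] with α hα
      exact iff_of_false (fun h => his (hα h)) hi
end

section
/- Let I be a finite subset of Z^ν and v_I = ∏_{i∈I}(a_i* a_i − a_i a_i*) in the CAR algebra A. Then v_I is a self-adjoint unitary in the even part A(I)₊ implementing the local parity automorphism Θ^I, and the commutant of the even part A(I)₊ in A equals A(I^c) + v_I A(I^c). -/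
/-- The self-adjoint unitary `v_I = ∏_{i ∈ I} (a_i* a_i − a_i a_i*)` associated to a finite
region `I` (the factors are even and mutually commute, so the enumeration order of `I` is
irrelevant). -/
noncomputable def carParityUnitary {ν : ℕ} {A : Type*} [CStarAlgebra A]
    (a : (Fin ν → ℤ) → A) (I : Finset (Fin ν → ℤ)) : A :=
  (I.toList.map (fun i => star (a i) * a i - a i * star (a i))).prod

section carHelpers

variable {ν : ℕ} {A : Type*} [CStarAlgebra A] {a : (Fin ν → ℤ) → A}

/-! ### Density of polynomials in the generators -/

theorem car_mem {J : Set (Fin ν → ℤ)} {j : Fin ν → ℤ} (hj : j ∈ J) : a j ∈ carSub a J :=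
  StarSubalgebra.le_topologicalClosure _
    (StarAlgebra.subset_adjoin ℂ _ (Set.mem_image_of_mem a hj))

theorem car_isClosed (J : Set (Fin ν → ℤ)) : IsClosed (carSub a J : Set A) :=
  StarSubalgebra.isClosed_topologicalClosure _

theorem car_adjoin_induction (J : Set (Fin ν → ℤ)) {p : A → Prop}
    (hgen : ∀ j ∈ J, p (a j)) (hstar : ∀ j ∈ J, p (star (a j)))
    (halg : ∀ r : ℂ, p (algebraMap ℂ A r))
    (hadd : ∀ x y, p x → p y → p (x + y)) (hmul : ∀ x y, p x → p y → p (x * y))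
    {x : A} (hx : x ∈ StarAlgebra.adjoin ℂ (a '' J)) : p x := by
  have hx' : x ∈ Algebra.adjoin ℂ (a '' J ∪ star (a '' J)) := by
    rw [← StarAlgebra.adjoin_toSubalgebra]
    exact hx
  clear hx
  induction hx' using Algebra.adjoin_induction with
  | mem y hy =>
    rcases hy with ⟨j, hj, rfl⟩ | ⟨j, hj, h⟩
    · exact hgen j hj
    · rw [← star_star y, ← h]
      exact hstar j hj
  | algebraMap r => exact halg r
  | add x y _ _ h1 h2 => exact hadd x y h1 h2
  | mul x y _ _ h1 h2 => exact hmul x y h1 h2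

theorem car_closure {J : Set (Fin ν → ℤ)} {s : Set A} (hs : IsClosed s)
    (h : ∀ x ∈ StarAlgebra.adjoin ℂ (a '' J), x ∈ s) {x : A} (hx : x ∈ carSub a J) : x ∈ s :=
  closure_minimal h hs hx

theorem car_continuous (Θ : A ≃⋆ₐ[ℂ] A) : Continuous Θ :=
  (StarAlgEquiv.isometry Θ).continuous

/-- A twisted commutation relation `b φ(y) = y b` passes from the generators to `A(J)`. -/
theorem car_twisted_commute (φ : A ≃⋆ₐ[ℂ] A) (J : Set (Fin ν → ℤ)) (b : A)
    (h1 : ∀ j ∈ J, b * φ (a j) = a j * b)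
    (h2 : ∀ j ∈ J, b * φ (star (a j)) = star (a j) * b)
    {y : A} (hy : y ∈ carSub a J) : b * φ y = y * b := by
  refine car_closure (s := {y | b * φ y = y * b}) ?_ ?_ hy
  · have := car_continuous φ
    exact isClosed_eq (by fun_prop) (by fun_prop)
  · intro x hx
    refine car_adjoin_induction (p := fun y => b * φ y = y * b) J h1 h2 ?_ ?_ ?_ hx
    · intro r
      rw [AlgHomClass.commutes φ r]
      exact (Algebra.commutes r b).symm
    · intro x y hx hy
      rw [map_add, mul_add, add_mul, hx, hy]
    · intro x y hx hy
      rw [map_mul, ← mul_assoc, hx, mul_assoc, hy, mul_assoc]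

/-- The parity automorphism is an involution. -/
theorem car_parity_sq (hgen : carSub a Set.univ = ⊤) (Θ : A ≃⋆ₐ[ℂ] A)
    (hΘ : ∀ i, Θ (a i) = - a i) (x : A) : Θ (Θ x) = x := by
  have h := car_twisted_commute (a := a) (Θ.trans Θ) Set.univ 1 (y := x)
    (by intro j _; simp [hΘ]) (by intro j _; simp [hΘ, map_star]) (by rw [hgen]; trivial)
  simpa using h

/-! ### Consequences of the anticommutation relations -/

theorem car_sq (hCAR₂ : ∀ i j, a i * a j + a j * a i = 0) (i : Fin ν → ℤ) : a i * a i = 0 := by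
  have h := hCAR₂ i i
  rw [← two_smul ℂ] at h
  exact (smul_eq_zero.mp h).resolve_left two_ne_zero

theorem car_star_sq (hCAR₂ : ∀ i j, a i * a j + a j * a i = 0) (i : Fin ν → ℤ) :
    star (a i) * star (a i) = 0 := by
  rw [← star_mul, car_sq hCAR₂, star_zero]

theorem car_mul_star
    (hCAR₁ : ∀ i j, star (a i) * a j + a j * star (a i) = if i = j then (1 : A) else 0)
    (i : Fin ν → ℤ) : a i * star (a i) = 1 - star (a i) * a i := by
  have h := hCAR₁ i i
  rw [if_pos rfl] at h
  rw [← h]; abel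

theorem car_anti (hCAR₂ : ∀ i j, a i * a j + a j * a i = 0) (i j : Fin ν → ℤ) :
    a i * a j = -(a j * a i) :=
  eq_neg_of_add_eq_zero_left (hCAR₂ i j)

theorem car_star_anti (hCAR₂ : ∀ i j, a i * a j + a j * a i = 0) (i j : Fin ν → ℤ) :
    star (a i) * star (a j) = -(star (a j) * star (a i)) := by
  rw [← star_mul, ← star_mul, car_anti hCAR₂, star_neg]

theorem car_mixed_anti
    (hCAR₁ : ∀ i j, star (a i) * a j + a j * star (a i) = if i = j then (1 : A) else 0)
    {i j : Fin ν → ℤ} (h : i ≠ j) : star (a i) * a j = -(a j * star (a i)) :=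
  eq_neg_of_add_eq_zero_left (by rw [hCAR₁, if_neg h])

theorem car_mixed_anti'
    (hCAR₁ : ∀ i j, star (a i) * a j + a j * star (a i) = if i = j then (1 : A) else 0)
    {i j : Fin ν → ℤ} (h : i ≠ j) : a i * star (a j) = -(star (a j) * a i) := by
  rw [car_mixed_anti hCAR₁ h.symm, neg_neg]

/-! ### Removing one site -/

/-- The map `z ↦ p* Θ(z) p + p p* z p p*`; for `p = a_i` it restricts to a projection of `A(J)`
onto `A(J \ {i})`. -/
def carProj (Θ : A ≃⋆ₐ[ℂ] A) (p : A) (z : A) : A :=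
  star p * Θ z * p + p * star p * z * (p * star p)

/-- The relations with `a_i` and `a_i*` turn the two terms of `carProj` into `z a_i* a_i` and
`z a_i a_i*`, which add up to `z`. -/
theorem carProj_fixed
    (hCAR₁ : ∀ i j, star (a i) * a j + a j * star (a i) = if i = j then (1 : A) else 0)
    (hCAR₂ : ∀ i j, a i * a j + a j * a i = 0)
    (Θ : A ≃⋆ₐ[ℂ] A) (i : Fin ν → ℤ) {z : A} (h1 : z * a i = a i * Θ z)
    (h2 : z * star (a i) = star (a i) * Θ z) : carProj Θ (a i) z = z := by
  have e : a i * star (a i) * z * (a i * star (a i)) = z * (a i * star (a i)) := by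
    have hpqp : a i * star (a i) * a i = a i := by
      rw [car_mul_star hCAR₁, sub_mul, one_mul, mul_assoc, car_sq hCAR₂, mul_zero, sub_zero]
    calc a i * star (a i) * z * (a i * star (a i))
        = a i * star (a i) * (z * a i) * star (a i) := by simp only [mul_assoc]
      _ = a i * star (a i) * a i * Θ z * star (a i) := by rw [h1]; simp only [mul_assoc]
      _ = z * (a i * star (a i)) := by rw [hpqp, ← h1, mul_assoc]
  rw [carProj, ← h2, e, mul_assoc, ← mul_add, hCAR₁, if_pos rfl, mul_one]

/-- Each polynomial in the generators over `J` has the form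
`c₀ + c₁ a_i + c₂ a_i* + c₃ a_i* a_i` with coefficients in `A(J \ {i})`. -/
theorem car_normal_form
    (hCAR₁ : ∀ i j, star (a i) * a j + a j * star (a i) = if i = j then (1 : A) else 0)
    (hCAR₂ : ∀ i j, a i * a j + a j * a i = 0)
    (J : Set (Fin ν → ℤ)) (i : Fin ν → ℤ) {x : A} (hx : x ∈ StarAlgebra.adjoin ℂ (a '' J)) :
    ∃ c₀ ∈ carSub a (J \ {i}), ∃ c₁ ∈ carSub a (J \ {i}), ∃ c₂ ∈ carSub a (J \ {i}),
      ∃ c₃ ∈ carSub a (J \ {i}),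
        x = c₀ + c₁ * a i + c₂ * star (a i) + c₃ * (star (a i) * a i) := by
  let M : A → Prop := fun x => ∃ c₀ ∈ carSub a (J \ {i}), ∃ c₁ ∈ carSub a (J \ {i}),
    ∃ c₂ ∈ carSub a (J \ {i}), ∃ c₃ ∈ carSub a (J \ {i}),
      x = c₀ + c₁ * a i + c₂ * star (a i) + c₃ * (star (a i) * a i)
  have hpp := car_sq hCAR₂ i
  have hqq := car_star_sq hCAR₂ i
  have hpq := car_mul_star hCAR₁ i
  have hp : ∀ m, M m → M (m * a i) := by
    rintro _ ⟨c₀, h₀, c₁, h₁, c₂, h₂, c₃, h₃, rfl⟩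
    refine ⟨0, zero_mem _, c₀, h₀, 0, zero_mem _, c₂, h₂, ?_⟩
    simp only [add_mul, mul_assoc, hpp, mul_zero]
    simp
  have hq : ∀ m, M m → M (m * star (a i)) := by
    rintro _ ⟨c₀, h₀, c₁, h₁, c₂, h₂, c₃, h₃, rfl⟩
    refine ⟨c₁, h₁, 0, zero_mem _, c₀ + c₃, add_mem h₀ h₃, -c₁, neg_mem h₁, ?_⟩
    simp only [add_mul, mul_assoc, hqq, hpq, mul_zero, mul_sub, mul_one, neg_mul, zero_mul]
    simp only [← mul_assoc (star (a i)) (star (a i)), hqq, zero_mul, mul_zero]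
    abel
  have hg : ∀ g ∈ carSub a (J \ {i}), a i * g = -(g * a i) → star (a i) * g = -(g * star (a i)) →
      ∀ m, M m → M (m * g) := by
    rintro g hgC hpg hqg _ ⟨c₀, h₀, c₁, h₁, c₂, h₂, c₃, h₃, rfl⟩
    refine ⟨c₀ * g, mul_mem h₀ hgC, -(c₁ * g), neg_mem (mul_mem h₁ hgC), -(c₂ * g),
      neg_mem (mul_mem h₂ hgC), c₃ * g, mul_mem h₃ hgC, ?_⟩
    have h : star (a i) * (a i * g) = g * (star (a i) * a i) := by
      rw [hpg, mul_neg, ← mul_assoc, hqg, neg_mul, neg_neg, mul_assoc]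
    simp only [add_mul, mul_assoc, h]
    rw [hpg, hqg]
    simp only [mul_neg, neg_mul, mul_assoc]
  -- The normal forms are stable under right multiplication by the whole polynomial algebra.
  have key : ∀ m, M m → M (m * x) := by
    refine car_adjoin_induction (p := fun x => ∀ m, M m → M (m * x)) J ?_ ?_ ?_ ?_ ?_ hx
    · intro j hj
      by_cases hji : j = i
      · rw [hji]; exact hp
      · exact hg _ (car_mem ⟨hj, hji⟩) (car_anti hCAR₂ i j)
          (car_mixed_anti hCAR₁ (Ne.symm hji))
    · intro j hj
      by_cases hji : j = i
      · rw [hji]; exact hq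
      · exact hg _ (star_mem (car_mem ⟨hj, hji⟩)) (car_mixed_anti' hCAR₁ (Ne.symm hji))
          (car_star_anti hCAR₂ i j)
    · rintro r _ ⟨c₀, h₀, c₁, h₁, c₂, h₂, c₃, h₃, rfl⟩
      have hr : algebraMap ℂ A r ∈ carSub a (J \ {i}) := algebraMap_mem _ r
      refine ⟨_, mul_mem hr h₀, _, mul_mem hr h₁, _, mul_mem hr h₂, _, mul_mem hr h₃, ?_⟩
      rw [← Algebra.commutes]
      simp only [mul_add, mul_assoc]
    · intro x y hx hy m hm
      obtain ⟨c₀, h₀, c₁, h₁, c₂, h₂, c₃, h₃, e⟩ := hx m hm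
      obtain ⟨d₀, k₀, d₁, k₁, d₂, k₂, d₃, k₃, e'⟩ := hy m hm
      refine ⟨_, add_mem h₀ k₀, _, add_mem h₁ k₁, _, add_mem h₂ k₂, _, add_mem h₃ k₃, ?_⟩
      rw [mul_add, e, e']
      simp only [add_mul]
      abel
    · intro x y hx hy m hm
      rw [← mul_assoc]
      exact hy _ (hx m hm)
  have := key 1 ⟨1, one_mem _, 0, zero_mem _, 0, zero_mem _, 0, zero_mem _, by simp⟩
  rwa [one_mul] at this

/-- `carProj` is linear over `A(J \ {i})` acting on the left, and it sends `1` to `1` and each of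
`a_i`, `a_i*`, `a_i* a_i` to `0`, so it picks out the coefficient `c₀` of the normal form. -/
theorem car_project
    (hCAR₁ : ∀ i j, star (a i) * a j + a j * star (a i) = if i = j then (1 : A) else 0)
    (hCAR₂ : ∀ i j, a i * a j + a j * a i = 0)
    (hgen : carSub a Set.univ = ⊤) (Θ : A ≃⋆ₐ[ℂ] A) (hΘ : ∀ i, Θ (a i) = - a i)
    (J : Set (Fin ν → ℤ)) (i : Fin ν → ℤ) {x : A} (hx : x ∈ carSub a J) :
    carProj Θ (a i) x ∈ carSub a (J \ {i}) := by
  have hΘs : ∀ j, Θ (star (a j)) = - star (a j) := fun j => by rw [map_star, hΘ, star_neg]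
  have hpp := car_sq hCAR₂ i
  have hqq := car_star_sq hCAR₂ i
  have hpq := car_mul_star hCAR₁ i
  have hp : ∀ c ∈ carSub a (J \ {i}), a i * Θ c = c * a i := by
    intro c hc
    refine car_twisted_commute Θ _ _ (fun j hj => ?_) (fun j hj => ?_) hc
    · rw [hΘ, mul_neg, car_anti hCAR₂, neg_neg]
    · rw [hΘs, mul_neg, car_mixed_anti' hCAR₁ (Ne.symm hj.2), neg_neg]
  have hq : ∀ c ∈ carSub a (J \ {i}), star (a i) * Θ c = c * star (a i) := by
    intro c hc
    refine car_twisted_commute Θ _ _ (fun j hj => ?_) (fun j hj => ?_) hc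
    · rw [hΘ, mul_neg, car_mixed_anti hCAR₁ (Ne.symm hj.2), neg_neg]
    · rw [hΘs, mul_neg, car_star_anti hCAR₂, neg_neg]
  have hq' : ∀ c ∈ carSub a (J \ {i}), star (a i) * c = Θ c * star (a i) := by
    intro c hc
    have h := congrArg Θ (hq c hc)
    rw [map_mul, map_mul, car_parity_sq hgen Θ hΘ, hΘs, neg_mul, mul_neg] at h
    exact neg_injective h
  have hmod : ∀ c ∈ carSub a (J \ {i}), ∀ m,
      carProj Θ (a i) (c * m) = c * carProj Θ (a i) m := by
    intro c hc m
    have h : a i * star (a i) * c = c * (a i * star (a i)) := by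
      rw [mul_assoc, hq' c hc, ← mul_assoc, hp c hc, mul_assoc]
    unfold carProj
    rw [map_mul, ← mul_assoc (star (a i)), hq c hc, ← mul_assoc (a i * star (a i)), h]
    simp only [mul_add, mul_assoc]
  have hqpq : star (a i) * (a i * star (a i)) = star (a i) := by
    rw [hpq, mul_sub, mul_one, ← mul_assoc, hqq, zero_mul, sub_zero]
  have hone : carProj Θ (a i) 1 = 1 := by
    unfold carProj
    rw [map_one, mul_one, mul_one, mul_assoc (a i), hqpq, hpq, add_sub_cancel]
  have hP : carProj Θ (a i) (a i) = 0 := by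
    unfold carProj
    rw [hΘ, mul_assoc (star (a i)), neg_mul, hpp, mul_assoc, ← mul_assoc (a i) (a i), hpp]
    simp
  have hQ : carProj Θ (a i) (star (a i)) = 0 := by
    unfold carProj
    rw [hΘs, mul_neg, hqq, mul_assoc (a i), hqq]
    simp
  have hQP : carProj Θ (a i) (star (a i) * a i) = 0 := by
    unfold carProj
    rw [← mul_assoc (a i * star (a i)), mul_assoc (a i) (star (a i)) (star (a i)), hqq, map_mul,
      hΘs, hΘ, neg_mul_neg, ← mul_assoc, hqq]
    simp
  refine car_closure (s := {x | carProj Θ (a i) x ∈ carSub a (J \ {i})}) ?_ ?_ hx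
  · have hc := car_continuous Θ
    have : Continuous (carProj Θ (a i)) := by
      unfold carProj
      fun_prop
    exact (car_isClosed _).preimage this
  · intro x hx
    obtain ⟨c₀, h₀, c₁, h₁, c₂, h₂, c₃, h₃, rfl⟩ := car_normal_form hCAR₁ hCAR₂ J i hx
    have hadd : ∀ x y, carProj Θ (a i) (x + y) = carProj Θ (a i) x + carProj Θ (a i) y := by
      intro x y
      simp only [carProj, map_add, mul_add, add_mul]
      abel
    have h0 := hmod c₀ h₀ 1
    rw [mul_one, hone, mul_one] at h0
    rw [Set.mem_ofPred_eq, hadd, hadd, hadd, hmod c₁ h₁, hmod c₂ h₂, hmod c₃ h₃, hP, hQ, hQP, h0]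
    simpa using h₀

/-- The graded commutant of `A(I)` is contained in `A(Iᶜ)`. -/
theorem car_graded_commutant
    (hCAR₁ : ∀ i j, star (a i) * a j + a j * star (a i) = if i = j then (1 : A) else 0)
    (hCAR₂ : ∀ i j, a i * a j + a j * a i = 0)
    (hgen : carSub a Set.univ = ⊤) (Θ : A ≃⋆ₐ[ℂ] A) (hΘ : ∀ i, Θ (a i) = - a i)
    (I : Finset (Fin ν → ℤ)) {z : A} (h1 : ∀ j ∈ I, z * a j = a j * Θ z)
    (h2 : ∀ j ∈ I, z * star (a j) = star (a j) * Θ z) :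
    z ∈ carSub a ((I : Set (Fin ν → ℤ))ᶜ) := by
  induction I using Finset.induction_on with
  | empty =>
    rw [Finset.coe_empty, Set.compl_empty, hgen]
    trivial
  | insert i s _ ih =>
    have hz := ih (fun j hj => h1 j (Finset.mem_insert_of_mem hj))
      (fun j hj => h2 j (Finset.mem_insert_of_mem hj))
    have h := car_project hCAR₁ hCAR₂ hgen Θ hΘ _ i hz
    rw [carProj_fixed hCAR₁ hCAR₂ Θ i (h1 i (Finset.mem_insert_self i s))
      (h2 i (Finset.mem_insert_self i s))] at h
    convert h using 2
    ext j
    simp [not_or, and_comm]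

/-! ### The parity unitary -/

/-- The factor `a_i* a_i - a_i a_i*` of the parity unitary at the site `i`. -/
def carSite (a : (Fin ν → ℤ) → A) (i : Fin ν → ℤ) : A := star (a i) * a i - a i * star (a i)

theorem carSite_star (i : Fin ν → ℤ) : star (carSite a i) = carSite a i := by
  simp [carSite]

theorem carSite_anti
    (hCAR₂ : ∀ i j, a i * a j + a j * a i = 0) (i : Fin ν → ℤ) :
    carSite a i * a i = -(a i * carSite a i) := by
  have hpp := car_sq hCAR₂ i
  rw [carSite, sub_mul, mul_sub, mul_assoc, hpp, ← mul_assoc (a i) (a i), hpp, mul_assoc]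
  simp

theorem carSite_sq
    (hCAR₁ : ∀ i j, star (a i) * a j + a j * star (a i) = if i = j then (1 : A) else 0)
    (hCAR₂ : ∀ i j, a i * a j + a j * a i = 0) (i : Fin ν → ℤ) :
    carSite a i * carSite a i = 1 := by
  have hpp := car_sq hCAR₂ i
  have hn : star (a i) * a i * (star (a i) * a i) = star (a i) * a i := by
    rw [mul_assoc, ← mul_assoc (a i), car_mul_star hCAR₁, sub_mul, one_mul, mul_assoc _ (a i), hpp]
    simp
  rw [carSite, car_mul_star hCAR₁]
  simp only [mul_sub, sub_mul, mul_one, one_mul, hn]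
  abel

theorem carSite_commute
    (hCAR₁ : ∀ i j, star (a i) * a j + a j * star (a i) = if i = j then (1 : A) else 0)
    (hCAR₂ : ∀ i j, a i * a j + a j * a i = 0) {i j : Fin ν → ℤ} (h : i ≠ j) :
    Commute (carSite a i) (a j) := by
  have hp := car_anti hCAR₂ i j
  have hq := car_mixed_anti hCAR₁ h
  have e1 : star (a i) * a i * a j = a j * (star (a i) * a i) := by
    rw [mul_assoc, hp, mul_neg, ← mul_assoc, hq, neg_mul, neg_neg, mul_assoc]
  have e2 : a i * star (a i) * a j = a j * (a i * star (a i)) := by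
    rw [mul_assoc, hq, mul_neg, ← mul_assoc, hp, neg_mul, neg_neg, mul_assoc]
  show _ = _
  rw [carSite, sub_mul, mul_sub, e1, e2]

theorem carSite_commute_site
    (hCAR₁ : ∀ i j, star (a i) * a j + a j * star (a i) = if i = j then (1 : A) else 0)
    (hCAR₂ : ∀ i j, a i * a j + a j * a i = 0) (i j : Fin ν → ℤ) :
    Commute (carSite a i) (carSite a j) := by
  by_cases h : i = j
  · rw [h]
  · have h1 := carSite_commute hCAR₁ hCAR₂ h
    have h2 : Commute (carSite a i) (star (a j)) := by
      have := h1.star_star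
      rwa [carSite_star] at this
    exact (h2.mul_right h1).sub_right (h1.mul_right h2)

theorem carSite_list_commute
    (hCAR₁ : ∀ i j, star (a i) * a j + a j * star (a i) = if i = j then (1 : A) else 0)
    (hCAR₂ : ∀ i j, a i * a j + a j * a i = 0) (i : Fin ν → ℤ) (l : List (Fin ν → ℤ)) :
    Commute (carSite a i) (l.map (carSite a)).prod := by
  refine Commute.list_prod_right _ _ fun x hx => ?_
  obtain ⟨j, _, rfl⟩ := List.mem_map.mp hx
  exact carSite_commute_site hCAR₁ hCAR₂ i j

theorem carSite_list_star
    (hCAR₁ : ∀ i j, star (a i) * a j + a j * star (a i) = if i = j then (1 : A) else 0)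
    (hCAR₂ : ∀ i j, a i * a j + a j * a i = 0) (l : List (Fin ν → ℤ)) :
    star (l.map (carSite a)).prod = (l.map (carSite a)).prod := by
  induction l with
  | nil => simp
  | cons i l ih =>
    rw [List.map_cons, List.prod_cons, star_mul, ih, carSite_star]
    exact (carSite_list_commute hCAR₁ hCAR₂ i l).symm

theorem carSite_list_sq
    (hCAR₁ : ∀ i j, star (a i) * a j + a j * star (a i) = if i = j then (1 : A) else 0)
    (hCAR₂ : ∀ i j, a i * a j + a j * a i = 0) (l : List (Fin ν → ℤ)) :
    (l.map (carSite a)).prod * (l.map (carSite a)).prod = 1 := by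
  induction l with
  | nil => simp
  | cons i l ih =>
    rw [List.map_cons, List.prod_cons]
    nth_rewrite 2 [(carSite_list_commute hCAR₁ hCAR₂ i l).eq]
    rw [mul_assoc, ← mul_assoc _ _ (carSite a i), ih, one_mul, carSite_sq hCAR₁ hCAR₂]

/-- The duplicate-freeness matters: a site occurring twice contributes the factor `1`. -/
theorem carSite_list_conj
    (hCAR₁ : ∀ i j, star (a i) * a j + a j * star (a i) = if i = j then (1 : A) else 0)
    (hCAR₂ : ∀ i j, a i * a j + a j * a i = 0) (j : Fin ν → ℤ) (l : List (Fin ν → ℤ))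
    (hl : l.Nodup) :
    (l.map (carSite a)).prod * (if j ∈ l then - a j else a j) = a j * (l.map (carSite a)).prod := by
  induction l with
  | nil => simp
  | cons i l ih =>
    obtain ⟨hi, hl⟩ := List.nodup_cons.mp hl
    have ih := ih hl
    rw [List.map_cons, List.prod_cons]
    by_cases hji : j = i
    · subst hji
      rw [if_neg hi] at ih
      rw [if_pos List.mem_cons_self, mul_neg, mul_assoc, ih, ← mul_assoc,
        carSite_anti hCAR₂, neg_mul, neg_neg, mul_assoc]
    · have : (j ∈ i :: l) ↔ j ∈ l := by simp [hji]
      simp only [this]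
      rw [mul_assoc, ih, ← mul_assoc, (carSite_commute hCAR₁ hCAR₂ (Ne.symm hji)).eq, mul_assoc]

end carHelpers

/-- Let `I` be a finite subset of `ℤ^ν` and
`v_I = ∏_{i∈I} (a_i* a_i − a_i a_i*)` in the CAR algebra `A`.  Then `v_I` is a self-adjoint
unitary in the even part `A(I)₊` implementing the local parity automorphism `Θ^I`, and the
commutant of `A(I)₊` in `A` equals `A(I^c) + v_I · A(I^c)`. -/
theorem car_local_parity_unitary_and_commutant_of_even_part
    {ν : ℕ} {A : Type*} [CStarAlgebra A]
    (a : (Fin ν → ℤ) → A)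
    (hCAR₁ : ∀ i j, star (a i) * a j + a j * star (a i) = if i = j then (1 : A) else 0)
    (hCAR₂ : ∀ i j, a i * a j + a j * a i = 0)
    (hgen : carSub a Set.univ = ⊤)
    -- the global parity automorphism
    (Θ : A ≃⋆ₐ[ℂ] A)
    (hΘ : ∀ i, Θ (a i) = - a i)
    (I : Finset (Fin ν → ℤ))
    -- the local parity automorphism `Θ^I`
    (ΘI : A ≃⋆ₐ[ℂ] A)
    (hΘI : ∀ i, ΘI (a i) = if i ∈ I then - a i else a i) :
    -- `v_I` is a self-adjoint unitary ...
    star (carParityUnitary a I) = carParityUnitary a I ∧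
    carParityUnitary a I * carParityUnitary a I = 1 ∧
    -- ... in the even part `A(I)₊` ...
    carParityUnitary a I ∈ carSub a (I : Set (Fin ν → ℤ)) ∧
    Θ (carParityUnitary a I) = carParityUnitary a I ∧
    -- ... implementing `Θ^I` on `A`
    (∀ x : A, carParityUnitary a I * x * carParityUnitary a I = ΘI x) ∧
    -- the commutant of `A(I)₊` in `A` is `A(I^c) + v_I A(I^c)`
    (∀ x : A,
      (∀ y ∈ carSub a (I : Set (Fin ν → ℤ)), Θ y = y → x * y = y * x) ↔
      ∃ c ∈ carSub a ((I : Set (Fin ν → ℤ))ᶜ), ∃ d ∈ carSub a ((I : Set (Fin ν → ℤ))ᶜ),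
        x = c + carParityUnitary a I * d) := by
  classical
  have hv : carParityUnitary a I = (I.toList.map (carSite a)).prod := rfl
  have hΘΘ := car_parity_sq hgen Θ hΘ
  have hΘs : ∀ j, Θ (star (a j)) = - star (a j) := fun j => by rw [map_star, hΘ, star_neg]
  set v := carParityUnitary a I with hvdef
  have hstar : star v = v := by rw [hv]; exact carSite_list_star hCAR₁ hCAR₂ _
  have hsq : v * v = 1 := by rw [hv]; exact carSite_list_sq hCAR₁ hCAR₂ _
  have hmem : v ∈ carSub a (I : Set (Fin ν → ℤ)) := by
    rw [hv]
    refine list_prod_mem fun x hx => ?_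
    obtain ⟨j, hj, rfl⟩ := List.mem_map.mp hx
    have hj' : a j ∈ carSub a (I : Set (Fin ν → ℤ)) := car_mem (by simpa using hj)
    exact sub_mem (mul_mem (star_mem hj') hj') (mul_mem hj' (star_mem hj'))
  have heven : Θ v = v := by
    rw [hv, map_list_prod, List.map_map]
    congr 2
    funext j
    simp [carSite, hΘ, hΘs]
  have hva : ∀ j, v * ΘI (a j) = a j * v := by
    intro j
    have := carSite_list_conj hCAR₁ hCAR₂ j I.toList I.nodup_toList
    rw [hΘI, hv]
    simpa only [Finset.mem_toList] using this
  have hvs : ∀ j, v * ΘI (star (a j)) = star (a j) * v := by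
    intro j
    -- Taking adjoints gives `ΘI (a j)* v = v a_j*`; conjugate by `v`.
    have h := congrArg star (hva j)
    rw [star_mul, star_mul, hstar, ← map_star] at h
    calc v * ΘI (star (a j)) = v * (ΘI (star (a j)) * v) * v := by
          rw [mul_assoc, mul_assoc, hsq, mul_one]
      _ = star (a j) * v := by rw [h, ← mul_assoc, hsq, one_mul]
  have himpl : ∀ x : A, v * x * v = ΘI x := by
    intro x
    have h := car_twisted_commute ΘI Set.univ v (fun j _ => hva j) (fun j _ => hvs j)
      (y := x) (by rw [hgen]; trivial)
    rw [mul_assoc, ← h, ← mul_assoc, hsq, one_mul]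
  -- `v` anticommutes with the generators of `A(I)`.
  have hvg : ∀ j ∈ I, v * a j = -(a j * v) := by
    intro j hj
    have h := hva j
    rw [hΘI, if_pos hj, mul_neg] at h
    rw [← h, neg_neg]
  have hvgs : ∀ j ∈ I, v * star (a j) = -(star (a j) * v) := by
    intro j hj
    have h := hvs j
    rw [map_star, hΘI, if_pos hj, star_neg, mul_neg] at h
    rw [← h, neg_neg]
  refine ⟨hstar, hsq, hmem, heven, himpl, fun x => ⟨fun hx => ?_, ?_⟩⟩
  · rcases I.eq_empty_or_nonempty with rfl | ⟨k, hk⟩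
    · refine ⟨x, ?_, 0, zero_mem _, by simp⟩
      rw [Finset.coe_empty, Set.compl_empty, hgen]
      trivial
    -- `γ = a_k + a_k*` is an odd self-adjoint involution in `A(I)`.
    have hγ : ∃ γ ∈ carSub a (I : Set (Fin ν → ℤ)), Θ γ = -γ ∧ γ * γ = 1 := by
      refine ⟨a k + star (a k), add_mem (car_mem hk) (star_mem (car_mem hk)), ?_, ?_⟩
      · rw [map_add, hΘ, hΘs, neg_add]
      · rw [add_mul, mul_add, mul_add, car_sq hCAR₂, car_star_sq hCAR₂, car_mul_star hCAR₁]
        abel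
    obtain ⟨γ, hγI, hΘγ, hγγ⟩ := hγ
    set w := Θ (γ * x * γ) with hw
    have hΘw : Θ w = γ * x * γ := hΘΘ _
    have hwx : ∀ g ∈ carSub a (I : Set (Fin ν → ℤ)), Θ g = -g →
        x * g = g * Θ w ∧ w * g = g * Θ x := by
      intro g hg hΘg
      have h1 : x * (γ * g) = γ * g * x :=
        hx _ (mul_mem hγI hg) (by rw [map_mul, hΘγ, hΘg, neg_mul_neg])
      have h2 : x * (g * γ) = g * γ * x :=
        hx _ (mul_mem hg hγI) (by rw [map_mul, hΘγ, hΘg, neg_mul_neg])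
      constructor
      · calc x * g = x * (g * γ) * γ := by rw [mul_assoc, mul_assoc, hγγ, mul_one]
          _ = g * Θ w := by rw [h2, hΘw]; simp only [mul_assoc]
      · have h3 : γ * x * γ * g = g * x := by
          rw [mul_assoc, mul_assoc, h1, ← mul_assoc, ← mul_assoc, hγγ, one_mul]
        have h4 := congrArg Θ h3
        rw [map_mul Θ (γ * x * γ), map_mul Θ g, ← hw, hΘg, mul_neg, neg_mul] at h4
        exact neg_injective h4
    have hgr : ∀ g ∈ carSub a (I : Set (Fin ν → ℤ)), Θ g = -g → v * g = -(g * v) →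
        ((1 / 2 : ℂ) • (x + w)) * g = g * Θ ((1 / 2 : ℂ) • (x + w)) ∧
        (v * ((1 / 2 : ℂ) • (x - w))) * g = g * Θ (v * ((1 / 2 : ℂ) • (x - w))) := by
      intro g hg hΘg hvg
      obtain ⟨e1, e2⟩ := hwx g hg hΘg
      constructor
      · rw [map_smul, map_add, smul_mul_assoc, mul_smul_comm, add_mul, e1, e2, mul_add, add_comm]
      · rw [map_mul, heven, map_smul, map_sub, mul_assoc, smul_mul_assoc, sub_mul, e1, e2,
          ← mul_sub, mul_smul_comm, mul_smul_comm, mul_smul_comm, ← mul_assoc, hvg, ← mul_assoc]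
        rw [neg_mul, ← mul_neg, neg_sub]
    refine ⟨(1 / 2 : ℂ) • (x + w), ?_, v * ((1 / 2 : ℂ) • (x - w)), ?_, ?_⟩
    · exact car_graded_commutant hCAR₁ hCAR₂ hgen Θ hΘ I
        (fun j hj => (hgr _ (car_mem hj) (hΘ j) (hvg j hj)).1)
        (fun j hj => (hgr _ (star_mem (car_mem hj)) (hΘs j) (hvgs j hj)).1)
    · exact car_graded_commutant hCAR₁ hCAR₂ hgen Θ hΘ I
        (fun j hj => (hgr _ (car_mem hj) (hΘ j) (hvg j hj)).2)
        (fun j hj => (hgr _ (star_mem (car_mem hj)) (hΘs j) (hvgs j hj)).2)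
    · rw [← mul_assoc, hsq, one_mul, ← smul_add, add_add_sub_cancel, ← two_smul ℂ x, smul_smul]
      norm_num
  · rintro ⟨c, hc, d, hd, rfl⟩ y hy hΘy
    have hvy : v * y = y * v := by
      have h := car_twisted_commute Θ _ v
        (fun j (hj : j ∈ (I : Set (Fin ν → ℤ))) => by rw [hΘ, mul_neg, hvg j hj, neg_neg])
        (fun j hj => by rw [hΘs, mul_neg, hvgs j hj, neg_neg]) hy
      rwa [hΘy] at h
    have hcy : ∀ c ∈ carSub a ((I : Set (Fin ν → ℤ))ᶜ), y * c = c * y := by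
      intro c hc
      refine car_twisted_commute (StarAlgEquiv.refl ℂ A) _ y (fun j hj => ?_) (fun j hj => ?_) hc
      · have h := car_twisted_commute Θ (I : Set (Fin ν → ℤ)) (a j)
          (fun i hi => by rw [hΘ, mul_neg, car_anti hCAR₂, neg_neg])
          (fun i hi => by
            rw [hΘs, mul_neg, car_mixed_anti' hCAR₁ (show j ≠ i from fun e => hj (e ▸ hi)), neg_neg]) hy
        rw [hΘy] at h
        exact h.symm
      · have h := car_twisted_commute Θ (I : Set (Fin ν → ℤ)) (star (a j))
          (fun i hi => by
            rw [hΘ, mul_neg, car_mixed_anti hCAR₁ (show j ≠ i from fun e => hj (e ▸ hi)), neg_neg])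
          (fun i hi => by rw [hΘs, mul_neg, car_star_anti hCAR₂, neg_neg]) hy
        rw [hΘy] at h
        exact h.symm
    rw [add_mul, mul_add, hcy c hc, mul_assoc, ← hcy d hd, ← mul_assoc, hvy, mul_assoc]
end

section
/- Let δ be a *-derivation with domain the local algebra A_loc of the CAR algebra A, commuting with the parity automorphism Θ. Then for every finite subset I of Z^ν there exists a unique element H(I) ∈ A such that: H(I)* = H(I), Θ(H(I)) = H(I), δ(A) = i[H(I), A] for all A ∈ A(I), and E_{I^c}(H(I)) = 0. Moreover, for finite subsets I ⊆ J one has H(I) = H(J) − E_{I^c}(H(J)). -/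
/-!
Write `γ` for the Majorana operators `a i + (a i)*` and `i (a i - (a i)*)`.  They are self-adjoint
anticommuting unitaries, and those with site in `I` generate `A(I)` as a closed algebra
(`carSub_eq_majAlg`).  Hence a closed subspace that contains `1` and is stable under left
multiplication by these operators contains `A(I)` (`majAlg_le_of_left_stable`); for finite `I` no
closure is needed, `A(I)` being finite-dimensional.

*Existence.*  A derivation is inner on a finite set of Majorana operators: if `K` implements it on
all but one of them, `γ k`, and `e` is the remaining error at `γ k`, then `K + (1/2) e γ k`
implements it on all of them (`exists_generator`).  As `δ` commutes with the adjoint and with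
parity, averaging makes this generator self-adjoint and even (`exists_average`).  Finally
`E_{I^c}(H)` is again self-adjoint and even, the latter because a trace is invariant under the
locally inner automorphism `Θ` (`trace_parity`).  Even elements of `A(I^c)` commute with `A(I)`, so
`H - E_{I^c}(H)` is a standard Hamiltonian (`isStd_sub_condExp`).

*Uniqueness.*  The difference of two standard Hamiltonians is even and commutes with `A(I)`, which
forces it into `A(I^c)` (`mem_majAlg_compl`), where `E_{I^c}` is the identity (`isStd_unique`).

*Consistency.*  For `I ⊆ J`, `H(J)` is an even self-adjoint generator on `A(I)`, so
`H(J) - E_{I^c}(H(J))` is standard for `I`, and uniqueness applies.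
-/

open scoped ComplexOrder

/-- The local algebra `A_loc = ⋃_{|I| < ∞} A(I)`, the union of the local subalgebras over all
finite regions. -/
noncomputable def carLoc {ν : ℕ} {A : Type*} [CStarAlgebra A]
    (a : (Fin ν → ℤ) → A) : Set A :=
  ⋃ I : Finset (Fin ν → ℤ), (carSub a (I : Set (Fin ν → ℤ)) : Set A)

/-- `H` is a standard local Hamiltonian for the region `I` of the derivation `δ`: it is
self-adjoint, `Θ`-even, generates `δ` on `A(I)` via `δ x = i[H, x]`, and is annihilated by the
conditional expectation onto `A(I^c)`. -/
def IsStdLocalHamiltonian {ν : ℕ} {A : Type*} [CStarAlgebra A]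
    (a : (Fin ν → ℤ) → A) (Θ : A ≃⋆ₐ[ℂ] A) (E : Set (Fin ν → ℤ) → A → A)
    (δ : A → A) (I : Finset (Fin ν → ℤ)) (H : A) : Prop :=
  star H = H ∧ Θ H = H ∧
  (∀ x ∈ carSub a (I : Set (Fin ν → ℤ)), δ x = Complex.I • (H * x - x * H)) ∧
  E ((I : Set (Fin ν → ℤ))ᶜ) H = 0


/-! ### Algebras generated by anticommuting involutions -/

section Majorana

variable {κ A : Type*} [CStarAlgebra A] {γ : κ → A}

/-- The closed unital algebra generated by the Majorana operators `γ k`, `k ∈ s`.  No adjoints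
are adjoined: the `γ k` used below are self-adjoint. -/
noncomputable def majAlg (γ : κ → A) (s : Set κ) : Subalgebra ℂ A :=
  (Algebra.adjoin ℂ (γ '' s)).topologicalClosure

lemma adjoin_le_of_left_stable {s : Set κ} (W : Submodule ℂ A) (h1 : 1 ∈ W)
    (hl : ∀ k ∈ s, ∀ x ∈ W, γ k * x ∈ W) {x : A} (hx : x ∈ Algebra.adjoin ℂ (γ '' s)) :
    x ∈ W := by
  suffices h : ∀ y ∈ W, x * y ∈ W by simpa using h 1 h1
  induction hx using Algebra.adjoin_induction with
  | mem x hx =>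
    obtain ⟨k, hk, rfl⟩ := hx
    exact hl k hk
  | algebraMap r => intro y hy; rw [← Algebra.smul_def]; exact W.smul_mem _ hy
  | add x y _ _ hx hy => intro z hz; rw [add_mul]; exact W.add_mem (hx z hz) (hy z hz)
  | mul x y _ _ hx hy => intro z hz; rw [mul_assoc]; exact hx _ (hy z hz)

/-- The induction principle used throughout: a closed subspace containing `1` and stable under
left multiplication by the generators contains the whole closed algebra. -/
lemma majAlg_le_of_left_stable {s : Set κ} (W : Submodule ℂ A) (hW : IsClosed (W : Set A))
    (h1 : 1 ∈ W) (hl : ∀ k ∈ s, ∀ x ∈ W, γ k * x ∈ W) {x : A} (hx : x ∈ majAlg γ s) :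
    x ∈ W := by
  have h : x ∈ closure (Algebra.adjoin ℂ (γ '' s) : Set A) := by
    rw [← Subalgebra.topologicalClosure_coe]; exact hx
  exact closure_minimal (fun y hy => adjoin_le_of_left_stable W h1 hl hy) hW h

lemma maj_mem_majAlg {s : Set κ} {k : κ} (hk : k ∈ s) : γ k ∈ majAlg γ s :=
  Subalgebra.le_topologicalClosure _ (Algebra.subset_adjoin ⟨k, hk, rfl⟩)

lemma majAlg_isClosed (γ : κ → A) (s : Set κ) : IsClosed (majAlg γ s : Set A) :=
  Subalgebra.isClosed_topologicalClosure _

/-- Normal ordering: adding one generator `γ k` replaces an invariant finite-dimensional space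
`M` by `M + γ k M`. -/
lemma exists_finiteDimensional_left_stable
    (hsq : ∀ k, γ k * γ k = 1) (hac : ∀ j k, j ≠ k → γ j * γ k = -(γ k * γ j))
    (s : Finset κ) : ∃ M : Submodule ℂ A, FiniteDimensional ℂ M ∧ 1 ∈ M ∧
      ∀ k ∈ s, ∀ x ∈ M, γ k * x ∈ M := by
  classical
  induction s using Finset.induction_on with
  | empty => exact ⟨Submodule.span ℂ {1}, inferInstance, Submodule.mem_span_singleton_self _,
      by simp⟩
  | insert k s hk ih =>
    obtain ⟨M, hM, h1, hs⟩ := ih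
    refine ⟨M ⊔ M.map (LinearMap.mulLeft ℂ (γ k)), inferInstance, Submodule.mem_sup_left h1, ?_⟩
    intro j hj x hx
    obtain ⟨y, hy, z, hz, rfl⟩ := Submodule.mem_sup.1 hx
    obtain ⟨w, hw, rfl⟩ := hz
    simp only [LinearMap.mulLeft_apply, mul_add, ← mul_assoc]
    by_cases hjk : j = k
    · subst hjk
      rw [hsq, one_mul, add_comm]
      exact Submodule.add_mem_sup hw ⟨y, hy, rfl⟩
    · have hj' : j ∈ s := by simpa [hjk] using hj
      refine Submodule.add_mem_sup (hs j hj' y hy) ⟨-(γ j * w), M.neg_mem (hs j hj' w hw), ?_⟩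
      simp [hac j k hjk, mul_assoc]

lemma majAlg_finset_le_adjoin
    (hsq : ∀ k, γ k * γ k = 1) (hac : ∀ j k, j ≠ k → γ j * γ k = -(γ k * γ j))
    {s : Set κ} (hs : s.Finite) {x : A} (hx : x ∈ majAlg γ s) :
    x ∈ Algebra.adjoin ℂ (γ '' s) := by
  obtain ⟨M, hM, h1, hl⟩ := exists_finiteDimensional_left_stable hsq hac hs.toFinset
  have hle : Subalgebra.toSubmodule (Algebra.adjoin ℂ (γ '' s)) ≤ M := fun y hy =>
    adjoin_le_of_left_stable M h1 (fun k hk => hl k (by simpa using hk)) hy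
  have hfd := Submodule.finiteDimensional_of_le hle
  have hcl : IsClosed (Algebra.adjoin ℂ (γ '' s) : Set A) :=
    (Subalgebra.toSubmodule (Algebra.adjoin ℂ (γ '' s))).closed_of_finiteDimensional
  have h : x ∈ closure (Algebra.adjoin ℂ (γ '' s) : Set A) := by
    rw [← Subalgebra.topologicalClosure_coe]; exact hx
  rwa [hcl.closure_eq] at h

/-- Every derivation is inner on a finite set of Majorana operators.  Here `d k` stands for the
value of the derivation at `γ k`, and `hd₁`, `hd₂` are the Leibniz rule applied to the
anticommutation relations.  If the derivation has been made to vanish on `s`, then half of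
`d k * γ k` generates it at `γ k` and commutes with all `γ j`, `j ∈ s`. -/
lemma exists_generator
    (hsq : ∀ k, γ k * γ k = 1) (hac : ∀ j k, j ≠ k → γ j * γ k = -(γ k * γ j))
    (d : κ → A) (hd₁ : ∀ k, d k * γ k + γ k * d k = 0)
    (hd₂ : ∀ j k, j ≠ k → d j * γ k + γ j * d k + (d k * γ j + γ k * d j) = 0)
    (s : Finset κ) : ∃ K : A, ∀ k ∈ s, d k = K * γ k - γ k * K := by
  classical
  induction s using Finset.induction_on with
  | empty => exact ⟨0, by simp⟩
  | insert k s hk ih =>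
    obtain ⟨K, hK⟩ := ih
    obtain ⟨e, he⟩ : ∃ e, e = d k - (K * γ k - γ k * K) := ⟨_, rfl⟩
    have huu := hsq k
    have hue : γ k * e = -(e * γ k) := by
      have h : γ k * e - -(e * γ k) =
          d k * γ k + γ k * d k + (γ k * γ k * K - K * (γ k * γ k)) := by
        rw [he]; noncomm_ring
      rw [← sub_eq_zero, h, hd₁ k, huu]; simp
    refine ⟨K + (1 / 2 : ℂ) • (e * γ k), fun j hj => ?_⟩
    simp only [add_mul, mul_add, smul_mul_assoc, mul_smul_comm]
    by_cases hjk : j = k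
    · subst hjk
      have h1 : e * γ j * γ j = e := by rw [mul_assoc, huu, mul_one]
      have h2 : γ j * (e * γ j) = -e := by rw [← mul_assoc, hue, neg_mul, h1]
      rw [h1, h2]
      have h3 : d j = K * γ j - γ j * K + e := by rw [he]; abel
      rw [h3]; module
    · have hj' : j ∈ s := by simpa [hjk] using hj
      have h1 := hK j hj'
      have h2 := hac j k hjk
      have h3 := hd₂ j k hjk
      have h4 : γ j * e = -(e * γ j) := by
        have h : γ j * e - -(e * γ j) =
            (K * γ j - γ j * K) * γ k + γ j * d k + (d k * γ j + γ k * (K * γ j - γ j * K)) -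
              (K * (γ j * γ k + γ k * γ j) - (γ j * γ k + γ k * γ j) * K) := by
          rw [he]; noncomm_ring
        rw [← h1, h3, h2] at h
        rw [← sub_eq_zero, h]; simp
      have h5 : γ j * (e * γ k) = e * γ k * γ j := by
        rw [← mul_assoc, h4, neg_mul, mul_assoc, mul_assoc, h2, mul_neg, neg_neg]
      rw [h5, h1]; abel

variable {Θ : A ≃⋆ₐ[ℂ] A}

/-- The graded commutation relation between `γ k` and the algebra of a region not containing
`k`. -/
lemma maj_mul_eq_parity_mul (hac : ∀ j k, j ≠ k → γ j * γ k = -(γ k * γ j))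
    (hΘ : ∀ k, Θ (γ k) = -γ k) {s : Set κ} {k : κ} (hk : k ∉ s) {y : A}
    (hy : y ∈ majAlg γ s) : γ k * y = Θ y * γ k := by
  have hcont : Continuous Θ := (StarAlgEquiv.isometry Θ).continuous
  let W : Submodule ℂ A :=
    { carrier := {y | γ k * y = Θ y * γ k}
      zero_mem' := by simp
      add_mem' := by
        intro x y hx hy
        simp only [Set.mem_ofPred_eq] at hx hy ⊢
        rw [mul_add, map_add, add_mul, hx, hy]
      smul_mem' := by
        intro c x hx
        simp only [Set.mem_ofPred_eq] at hx ⊢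
        rw [map_smul, mul_smul_comm, smul_mul_assoc, hx] }
  refine majAlg_le_of_left_stable W ?_ ?_ ?_ hy
  · exact isClosed_eq (by fun_prop) (by fun_prop)
  · change γ k * 1 = Θ 1 * γ k
    simp
  · intro j hj x hx
    have hx : γ k * x = Θ x * γ k := hx
    change γ k * (γ j * x) = Θ (γ j * x) * γ k
    have hjk : k ≠ j := by rintro rfl; exact hk hj
    rw [map_mul, hΘ, ← mul_assoc, hac k j hjk, neg_mul, mul_assoc, hx]
    simp [mul_assoc]

/-- The even part of the commutant of the algebra of a finite region `s` lies in the algebra of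
the complement.  Up to a factor `2`, the map `Φ x = x + γ k * Θ x * γ k` fixes even elements
commuting with `γ k`, and it removes `γ k` from every polynomial in the `γ`'s. -/
lemma mem_majAlg_compl (hsq : ∀ k, γ k * γ k = 1)
    (hac : ∀ j k, j ≠ k → γ j * γ k = -(γ k * γ j))
    (hΘ : ∀ k, Θ (γ k) = -γ k) {D : A} (hgen : D ∈ majAlg γ Set.univ) (hD : Θ D = D)
    (s : Finset κ) (hcomm : ∀ k ∈ s, γ k * D = D * γ k) :
    D ∈ majAlg γ (s : Set κ)ᶜ := by
  classical
  have hcont : Continuous Θ := (StarAlgEquiv.isometry Θ).continuous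
  induction s using Finset.induction_on with
  | empty => simpa using hgen
  | insert k s hk ih =>
    have ih := ih fun j hj => hcomm j (Finset.mem_insert_of_mem hj)
    set B := majAlg γ ((insert k s : Finset κ) : Set κ)ᶜ with hB
    let Φ : A →ₗ[ℂ] A :=
      { toFun := fun x => x + γ k * Θ x * γ k
        map_add' := by intro x y; rw [map_add, mul_add, add_mul]; abel
        map_smul' := by intro c x; simp }
    have hΦ : ∀ x, Φ x = x + γ k * Θ x * γ k := fun _ => rfl
    have hΦc : Continuous Φ := by
      change Continuous fun x => x + γ k * Θ x * γ k
      fun_prop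
    have hΦm : ∀ j, j ≠ k → ∀ x, Φ (γ j * x) = γ j * Φ x := by
      intro j hj x
      rw [hΦ, hΦ, map_mul, hΘ, neg_mul, mul_neg, ← mul_assoc (γ k), hac k j hj.symm]
      noncomm_ring
    let W : Submodule ℂ A := (Subalgebra.toSubmodule B).comap Φ ⊓
      (Subalgebra.toSubmodule B).comap (Φ ∘ₗ LinearMap.mulLeft ℂ (γ k))
    have hWm : ∀ x, x ∈ W ↔ Φ x ∈ B ∧ Φ (γ k * x) ∈ B := fun _ => Iff.rfl
    have hDW : D ∈ W := by
      refine majAlg_le_of_left_stable W ?_ ?_ ?_ ih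
      · have hcl := majAlg_isClosed γ ((insert k s : Finset κ) : Set κ)ᶜ
        exact (hcl.preimage hΦc).inter
          (hcl.preimage (hΦc.comp (continuous_const.mul continuous_id)))
      · rw [hWm, hΦ, hΦ, mul_one, hΘ, map_one, mul_one, hsq, mul_neg, neg_mul, hsq, one_mul,
          add_neg_cancel]
        exact ⟨add_mem (one_mem _) (one_mem _), zero_mem _⟩
      · intro j hj x hx
        rw [hWm] at hx ⊢
        by_cases hjk : j = k
        · subst hjk
          rw [← mul_assoc, hsq, one_mul]
          exact ⟨hx.2, hx.1⟩
        · have hjB : γ j ∈ B := maj_mem_majAlg (by simpa [hjk] using hj)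
          have h : γ k * (γ j * x) = -(γ j * (γ k * x)) := by
            rw [← mul_assoc, hac k j (Ne.symm hjk), neg_mul, mul_assoc]
          rw [h, map_neg, hΦm j hjk, hΦm j hjk]
          exact ⟨mul_mem hjB hx.1, neg_mem (mul_mem hjB hx.2)⟩
    have h2 : Φ D = (2 : ℂ) • D := by
      rw [hΦ, hD, hcomm k (Finset.mem_insert_self _ _), mul_assoc, hsq, mul_one, two_smul]
    have h3 : (2 : ℂ) • D ∈ B := h2 ▸ ((hWm D).1 hDW).1
    simpa [smul_smul] using B.smul_mem h3 (1 / 2 : ℂ)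

end Majorana

/-! ### Majorana operators of the CAR algebra -/

section CAR

variable {ν : ℕ} {A : Type*} [CStarAlgebra A] {a : (Fin ν → ℤ) → A}

/-- The two Majorana operators `a i + (a i)*` and `i (a i - (a i)*)` of the site `i`. -/
noncomputable def maj (a : (Fin ν → ℤ) → A) (k : (Fin ν → ℤ) × Bool) : A :=
  if k.2 then Complex.I • (a k.1 - star (a k.1)) else a k.1 + star (a k.1)

lemma maj_false (i : Fin ν → ℤ) : maj a (i, false) = a i + star (a i) := by simp [maj]

lemma maj_true (i : Fin ν → ℤ) : maj a (i, true) = Complex.I • (a i - star (a i)) := by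
  simp [maj]

lemma star_maj (k : (Fin ν → ℤ) × Bool) : star (maj a k) = maj a k := by
  obtain ⟨i, _ | _⟩ := k
  · simp [maj_false, add_comm]
  · simp only [maj_true, star_smul, star_sub, star_star, Complex.star_def, Complex.conj_I]
    rw [neg_smul, ← smul_neg, neg_sub]

lemma maj_anticomm
    (hCAR₁ : ∀ i j, star (a i) * a j + a j * star (a i) = if i = j then (1 : A) else 0)
    (hCAR₂ : ∀ i j, a i * a j + a j * a i = 0) (j k : (Fin ν → ℤ) × Bool) :
    maj a j * maj a k + maj a k * maj a j = if j = k then (2 : ℂ) • (1 : A) else 0 := by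
  have hCAR₃ : ∀ i j, star (a i) * star (a j) + star (a j) * star (a i) = 0 := by
    intro i j
    have := congrArg star (hCAR₂ j i)
    simpa using this
  obtain ⟨i, b⟩ := j
  obtain ⟨j, c⟩ := k
  have h1 := hCAR₁ i j
  have h2 := hCAR₁ j i
  have h3 := hCAR₂ i j
  have h4 := hCAR₃ i j
  have hji : (if j = i then (1 : A) else 0) = if i = j then (1 : A) else 0 := by
    simp only [eq_comm]
  rw [hji] at h2
  have hff : (a i + star (a i)) * (a j + star (a j)) + (a j + star (a j)) * (a i + star (a i)) =
      (a i * a j + a j * a i) + (star (a i) * star (a j) + star (a j) * star (a i)) +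
        (star (a i) * a j + a j * star (a i)) + (star (a j) * a i + a i * star (a j)) := by
    noncomm_ring
  have hft : (a i + star (a i)) * (a j - star (a j)) + (a j - star (a j)) * (a i + star (a i)) =
      (a i * a j + a j * a i) - (star (a i) * star (a j) + star (a j) * star (a i)) +
        (star (a i) * a j + a j * star (a i)) - (star (a j) * a i + a i * star (a j)) := by
    noncomm_ring
  have htf : (a i - star (a i)) * (a j + star (a j)) + (a j + star (a j)) * (a i - star (a i)) =
      (a i * a j + a j * a i) - (star (a i) * star (a j) + star (a j) * star (a i)) -
        (star (a i) * a j + a j * star (a i)) + (star (a j) * a i + a i * star (a j)) := by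
    noncomm_ring
  have htt : (a i - star (a i)) * (a j - star (a j)) + (a j - star (a j)) * (a i - star (a i)) =
      (a i * a j + a j * a i) + (star (a i) * star (a j) + star (a j) * star (a i)) -
        (star (a i) * a j + a j * star (a i)) - (star (a j) * a i + a i * star (a j)) := by
    noncomm_ring
  rw [h1, h2, h3, h4] at hff hft htf htt
  rcases b with _ | _ <;> rcases c with _ | _
  · rw [maj_false, maj_false, hff]
    by_cases hij : i = j <;> simp [hij, two_smul]
  · rw [maj_false, maj_true, mul_smul_comm, smul_mul_assoc, ← smul_add, hft]
    simp
  · rw [maj_false, maj_true, mul_smul_comm, smul_mul_assoc, ← smul_add, htf]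
    simp
  · rw [maj_true, maj_true]
    simp only [mul_smul_comm, smul_mul_assoc, ← smul_add]
    rw [htt, smul_smul, Complex.I_mul_I]
    by_cases hij : i = j <;> simp [hij, two_smul]

lemma maj_sq
    (hCAR₁ : ∀ i j, star (a i) * a j + a j * star (a i) = if i = j then (1 : A) else 0)
    (hCAR₂ : ∀ i j, a i * a j + a j * a i = 0) (k : (Fin ν → ℤ) × Bool) :
    maj a k * maj a k = 1 := by
  have h := maj_anticomm hCAR₁ hCAR₂ k k
  rw [if_pos rfl, ← two_smul ℂ] at h
  exact smul_right_injective A (two_ne_zero (α := ℂ)) h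

lemma maj_mul_maj
    (hCAR₁ : ∀ i j, star (a i) * a j + a j * star (a i) = if i = j then (1 : A) else 0)
    (hCAR₂ : ∀ i j, a i * a j + a j * a i = 0) (j k : (Fin ν → ℤ) × Bool) (hjk : j ≠ k) :
    maj a j * maj a k = -(maj a k * maj a j) := by
  have h := maj_anticomm hCAR₁ hCAR₂ j k
  rw [if_neg hjk] at h
  exact eq_neg_of_add_eq_zero_left h

lemma parity_maj {Θ : A ≃⋆ₐ[ℂ] A} (hΘ : ∀ i, Θ (a i) = -a i) (k : (Fin ν → ℤ) × Bool) :
    Θ (maj a k) = -maj a k := by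
  obtain ⟨i, _ | _⟩ := k
  · simp [maj_false, map_star, hΘ, add_comm]
  · simp only [maj_true, map_smul, map_sub, map_star, hΘ, star_neg, ← smul_neg]
    congr 1; abel

lemma carSub_eq_majAlg (I : Set (Fin ν → ℤ)) (x : A) :
    x ∈ carSub a I ↔ x ∈ majAlg (maj a) {k | k.1 ∈ I} := by
  have h : (StarAlgebra.adjoin ℂ (a '' I)).toSubalgebra =
      Algebra.adjoin ℂ (maj a '' {k | k.1 ∈ I}) := by
    rw [StarAlgebra.adjoin_toSubalgebra]
    apply le_antisymm
    · have hf : ∀ i ∈ I, a i + star (a i) ∈ Algebra.adjoin ℂ (maj a '' {k | k.1 ∈ I}) :=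
        fun i hi => Algebra.subset_adjoin ⟨(i, false), hi, maj_false i⟩
      have ht : ∀ i ∈ I, a i - star (a i) ∈ Algebra.adjoin ℂ (maj a '' {k | k.1 ∈ I}) := by
        intro i hi
        have h : maj a (i, true) ∈ Algebra.adjoin ℂ (maj a '' {k | k.1 ∈ I}) :=
          Algebra.subset_adjoin ⟨(i, true), hi, rfl⟩
        rw [maj_true] at h
        simpa [smul_smul] using Subalgebra.smul_mem _ h (-Complex.I)
      refine Algebra.adjoin_le ?_
      rintro x (⟨i, hi, rfl⟩ | hx)
      · have h := Subalgebra.smul_mem _ (add_mem (hf i hi) (ht i hi)) (1 / 2 : ℂ)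
        rw [SetLike.mem_coe]
        convert h using 1
        module
      · obtain ⟨i, hi, hix⟩ := Set.mem_star.1 hx
        obtain rfl : x = star (a i) := by rw [hix, star_star]
        have h := Subalgebra.smul_mem _ (sub_mem (hf i hi) (ht i hi)) (1 / 2 : ℂ)
        rw [SetLike.mem_coe]
        convert h using 1
        module
    · refine Algebra.adjoin_le ?_
      rintro _ ⟨⟨i, b⟩, hi, rfl⟩
      have h1 : a i ∈ Algebra.adjoin ℂ (a '' I ∪ star (a '' I)) :=
        Algebra.subset_adjoin (Or.inl ⟨i, hi, rfl⟩)
      have h2 : star (a i) ∈ Algebra.adjoin ℂ (a '' I ∪ star (a '' I)) :=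
        Algebra.subset_adjoin (Or.inr (Set.star_mem_star.2 ⟨i, hi, rfl⟩))
      rcases b with _ | _
      · rw [maj_false]; exact add_mem h1 h2
      · rw [maj_true]; exact Subalgebra.smul_mem _ (sub_mem h1 h2) _
  have h' : (StarAlgebra.adjoin ℂ (a '' I) : Set A) =
      Algebra.adjoin ℂ (maj a '' {k | k.1 ∈ I}) := by rw [← h]; rfl
  rw [carSub, majAlg, ← SetLike.mem_coe, StarSubalgebra.topologicalClosure_coe, h',
    ← Subalgebra.topologicalClosure_coe, SetLike.mem_coe]

lemma maj_mem_carSub {I : Set (Fin ν → ℤ)} {k : (Fin ν → ℤ) × Bool} (hk : k.1 ∈ I) :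
    maj a k ∈ carSub a I :=
  (carSub_eq_majAlg I _).2 (maj_mem_majAlg hk)

lemma carSub_mono {I J : Set (Fin ν → ℤ)} (h : I ⊆ J) : carSub a I ≤ carSub a J :=
  StarSubalgebra.topologicalClosure_mono (StarAlgebra.adjoin_mono (Set.image_mono h))

lemma mem_carLoc {I : Finset (Fin ν → ℤ)} {x : A}
    (hx : x ∈ carSub a (I : Set (Fin ν → ℤ))) : x ∈ carLoc a :=
  Set.mem_iUnion.2 ⟨I, hx⟩

lemma carSub_isClosed (I : Set (Fin ν → ℤ)) : IsClosed (carSub a I : Set A) :=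
  StarSubalgebra.isClosed_topologicalClosure _

lemma parity_mem_carSub {Θ : A ≃⋆ₐ[ℂ] A} (hΘ : ∀ i, Θ (a i) = -a i) {I : Set (Fin ν → ℤ)}
    {x : A} (hx : x ∈ carSub a I) : Θ x ∈ carSub a I := by
  have hcont : Continuous Θ := (StarAlgEquiv.isometry Θ).continuous
  rw [carSub_eq_majAlg] at hx ⊢
  let W : Submodule ℂ A :=
    { carrier := {y | Θ y ∈ majAlg (maj a) {k | k.1 ∈ I}}
      zero_mem' := by simp
      add_mem' := by
        intro x y hx hy
        simp only [Set.mem_ofPred_eq] at hx hy ⊢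
        rw [map_add]; exact add_mem hx hy
      smul_mem' := by
        intro c x hx
        simp only [Set.mem_ofPred_eq] at hx ⊢
        rw [map_smul]; exact Subalgebra.smul_mem _ hx c }
  refine majAlg_le_of_left_stable W ((majAlg_isClosed _ _).preimage hcont) ?_ ?_ hx
  · change Θ 1 ∈ majAlg (maj a) {k | k.1 ∈ I}
    rw [map_one]; exact one_mem _
  · intro k hk y hy
    change Θ (maj a k * y) ∈ majAlg (maj a) {k | k.1 ∈ I}
    rw [map_mul, parity_maj hΘ]
    exact mul_mem (neg_mem (maj_mem_majAlg hk)) hy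

lemma parity_parity (hgen : carSub a Set.univ = ⊤) {Θ : A ≃⋆ₐ[ℂ] A}
    (hΘ : ∀ i, Θ (a i) = -a i) (x : A) : Θ (Θ x) = x := by
  have hcont : Continuous Θ := (StarAlgEquiv.isometry Θ).continuous
  let W : Submodule ℂ A :=
    { carrier := {y | Θ (Θ y) = y}
      zero_mem' := by simp
      add_mem' := by
        intro x y hx hy
        simp only [Set.mem_ofPred_eq] at hx hy ⊢
        rw [map_add, map_add, hx, hy]
      smul_mem' := by
        intro c x hx
        simp only [Set.mem_ofPred_eq] at hx ⊢
        rw [map_smul, map_smul, hx] }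
  have hx : x ∈ majAlg (maj a) {k | k.1 ∈ Set.univ} := by
    rw [← carSub_eq_majAlg, hgen]; trivial
  refine majAlg_le_of_left_stable W (isClosed_eq (by fun_prop) continuous_id) ?_ ?_ hx
  · change Θ (Θ 1) = 1
    simp
  · intro k _ y hy
    have hy : Θ (Θ y) = y := hy
    change Θ (Θ (maj a k * y)) = maj a k * y
    simp only [map_mul, parity_maj hΘ, map_neg, neg_neg, hy]

/-- On a finite region the parity automorphism is inner. -/
lemma exists_parity_unit
    (hCAR₁ : ∀ i j, star (a i) * a j + a j * star (a i) = if i = j then (1 : A) else 0)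
    (hCAR₂ : ∀ i j, a i * a j + a j * a i = 0) (F : Finset (Fin ν → ℤ)) :
    ∃ P Q : A, Q * P = 1 ∧ P * Q = 1 ∧ ∀ k : (Fin ν → ℤ) × Bool,
      (k.1 ∈ F → P * maj a k = -(maj a k * P)) ∧ (k.1 ∉ F → P * maj a k = maj a k * P) := by
  have hsq := maj_sq hCAR₁ hCAR₂
  have hac := maj_mul_maj hCAR₁ hCAR₂
  induction F using Finset.induction_on with
  | empty => exact ⟨1, 1, by simp, by simp, by simp⟩
  | insert i F hi ih =>
    obtain ⟨P, Q, hQP, hPQ, hP⟩ := ih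
    obtain ⟨u, hu⟩ : ∃ u, u = maj a (i, false) := ⟨_, rfl⟩
    obtain ⟨v, hv⟩ : ∃ v, v = maj a (i, true) := ⟨_, rfl⟩
    have hu2 : u * u = 1 := by rw [hu, hsq]
    have hv2 : v * v = 1 := by rw [hv, hsq]
    have hout : ∀ k : (Fin ν → ℤ) × Bool, k.1 ≠ i →
        u * v * maj a k = maj a k * (u * v) := by
      intro k hk
      have h1 : u * maj a k = -(maj a k * u) := by
        rw [hu]; exact hac _ _ fun h => hk (by rw [← h])
      have h2 : v * maj a k = -(maj a k * v) := by
        rw [hv]; exact hac _ _ fun h => hk (by rw [← h])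
      rw [mul_assoc, h2, mul_neg, ← mul_assoc, h1, neg_mul, neg_neg, mul_assoc]
    have huv : u * v = -(v * u) := by rw [hu, hv]; exact hac _ _ (by simp)
    have hin : ∀ k : (Fin ν → ℤ) × Bool, k.1 = i →
        u * v * maj a k = -(maj a k * (u * v)) := by
      rintro ⟨j, _ | _⟩ rfl
      · rw [← hu, huv, neg_mul, neg_inj, mul_assoc, mul_neg, ← mul_assoc u, huv, neg_mul,
          neg_neg, mul_assoc]
      · rw [← hv, huv, neg_mul, mul_neg, neg_neg, mul_assoc, huv, mul_neg, neg_neg]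
    refine ⟨P * (u * v), v * u * Q, ?_, ?_, fun k => ⟨fun hk => ?_, fun hk => ?_⟩⟩
    · rw [show v * u * Q * (P * (u * v)) = v * (u * (Q * P) * u) * v by noncomm_ring, hQP,
        mul_one, hu2, mul_one, hv2]
    · rw [show P * (u * v) * (v * u * Q) = P * (u * (v * v) * u) * Q by noncomm_ring, hv2,
        mul_one, hu2, mul_one, hPQ]
    · by_cases hki : k.1 = i
      · rw [mul_assoc, hin k hki, mul_neg, ← mul_assoc, (hP k).2 (hki ▸ hi), mul_assoc]
      · have hkF : k.1 ∈ F := by simpa [hki] using hk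
        rw [mul_assoc, hout k hki, ← mul_assoc, (hP k).1 hkF, neg_mul, mul_assoc]
    · simp only [Finset.mem_insert, not_or] at hk
      rw [mul_assoc, hout k hk.1, ← mul_assoc, (hP k).2 hk.2, mul_assoc]

/-! ### The trace and its conditional expectations -/

/-- A tracial functional is invariant under the parity automorphism, because the latter is inner
on every finite region and the local algebra is dense. -/
lemma trace_parity
    (hCAR₁ : ∀ i j, star (a i) * a j + a j * star (a i) = if i = j then (1 : A) else 0)
    (hCAR₂ : ∀ i j, a i * a j + a j * a i = 0) (hgen : carSub a Set.univ = ⊤)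
    {τ : A →L[ℂ] ℂ} (hτtracial : ∀ x y : A, τ (x * y) = τ (y * x))
    {Θ : A ≃⋆ₐ[ℂ] A} (hΘ : ∀ i, Θ (a i) = -a i) (x : A) : τ (Θ x) = τ x := by
  have hcont : Continuous Θ := (StarAlgEquiv.isometry Θ).continuous
  choose P Q hQP hPQ hP using exists_parity_unit hCAR₁ hCAR₂
  let W : Submodule ℂ A :=
    { carrier := {y | ∀ᶠ F in Filter.atTop, P F * y = Θ y * P F}
      zero_mem' := by simp
      add_mem' := by
        intro x y hx hy
        simp only [Set.mem_ofPred_eq] at hx hy ⊢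
        filter_upwards [hx, hy] with F h1 h2
        rw [map_add, mul_add, add_mul, h1, h2]
      smul_mem' := by
        intro c x hx
        simp only [Set.mem_ofPred_eq] at hx ⊢
        filter_upwards [hx] with F h1
        rw [map_smul, mul_smul_comm, smul_mul_assoc, h1] }
  have hloc : ∀ y ∈ Algebra.adjoin ℂ (maj a '' {k | k.1 ∈ Set.univ}), τ (Θ y) = τ y := by
    intro y hy
    have hyW : y ∈ W := by
      refine adjoin_le_of_left_stable W ?_ ?_ hy
      · exact Filter.Eventually.of_forall fun F => by simp
      · intro k _ z hz
        have hz : ∀ᶠ F in Filter.atTop, P F * z = Θ z * P F := hz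
        change ∀ᶠ F in Filter.atTop, P F * (maj a k * z) = Θ (maj a k * z) * P F
        filter_upwards [hz, Filter.eventually_ge_atTop {k.1}] with F h1 h2
        have hk : k.1 ∈ F := h2 (Finset.mem_singleton_self _)
        rw [map_mul, parity_maj hΘ, ← mul_assoc, (hP F k).1 hk, neg_mul, neg_mul, mul_assoc, h1,
          neg_mul, mul_assoc]
    have hyW : ∀ᶠ F in Filter.atTop, P F * y = Θ y * P F := hyW
    obtain ⟨F, hF⟩ := hyW.exists
    calc τ (Θ y) = τ (Θ y * P F * Q F) := by rw [mul_assoc, hPQ, mul_one]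
      _ = τ (P F * (y * Q F)) := by rw [← hF, mul_assoc]
      _ = τ (y * (Q F * P F)) := by rw [hτtracial, mul_assoc]
      _ = τ y := by rw [hQP, mul_one]
  have hx : x ∈ majAlg (maj a) {k | k.1 ∈ Set.univ} := by
    rw [← carSub_eq_majAlg, hgen]; trivial
  have hx' : x ∈ closure (Algebra.adjoin ℂ (maj a '' {k | k.1 ∈ Set.univ}) : Set A) := by
    rw [← Subalgebra.topologicalClosure_coe]; exact hx
  have hcl : IsClosed {y : A | τ (Θ y) = τ y} :=
    isClosed_eq (τ.continuous.comp hcont) τ.continuous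
  exact closure_minimal hloc hcl hx'

/-- A positive functional is hermitian: expand `τ ((x + c)* (x + c)) ≥ 0` for `c = 1` and
`c = i`. -/
lemma map_star_of_pos {τ : A →L[ℂ] ℂ} (hτ1 : τ 1 = 1) (hτpos : ∀ x : A, 0 ≤ τ (star x * x))
    (x : A) : τ (star x) = star (τ x) := by
  have him : ∀ y : A, (τ (star y * y)).im = 0 := fun y => (Complex.nonneg_iff.1 (hτpos y)).2.symm
  have h0 := him x
  have h1 := him (x + 1)
  have h2 := him (x + Complex.I • (1 : A))
  have e1 : star (x + 1) * (x + 1) = star x * x + star x + x + 1 := by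
    rw [star_add, star_one]; noncomm_ring
  have e2 : star (x + Complex.I • (1 : A)) * (x + Complex.I • (1 : A)) =
      star x * x + Complex.I • star x - Complex.I • x + 1 := by
    simp only [star_add, star_smul, star_one, Complex.star_def, Complex.conj_I, add_mul, mul_add,
      smul_mul_assoc, mul_smul_comm, one_mul, mul_one]
    have hI : Complex.I • Complex.I • (1 : A) = -1 := by
      rw [smul_smul, Complex.I_mul_I, neg_smul, one_smul]
    simp only [neg_smul, smul_add, smul_neg, hI]
    abel
  rw [e1] at h1
  rw [e2] at h2
  simp [hτ1, h0] at h1 h2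
  apply Complex.ext <;> simp <;> linarith

section CondExp

variable {τ : A →L[ℂ] ℂ} {Θ : A ≃⋆ₐ[ℂ] A} {E : Set (Fin ν → ℤ) → A → A}

lemma condExp_unique (hτtracial : ∀ x y : A, τ (x * y) = τ (y * x))
    (hτfaithful : ∀ x : A, τ (star x * x) = 0 → x = 0) {K : Set (Fin ν → ℤ)} {F : A → A}
    (hF : IsCondExp a τ K F) {x y : A} (hy : y ∈ carSub a K)
    (h : ∀ b ∈ carSub a K, τ (x * b) = τ (y * b)) : F x = y := by
  have hd : F x - y ∈ carSub a K := sub_mem (hF.1 x) hy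
  have hd' := star_mem hd
  refine sub_eq_zero.1 (hτfaithful _ ?_)
  rw [hτtracial, sub_mul, map_sub, ← hF.2 x _ hd', h _ hd', sub_self]

lemma condExp_of_mem (hτtracial : ∀ x y : A, τ (x * y) = τ (y * x))
    (hτfaithful : ∀ x : A, τ (star x * x) = 0 → x = 0) {K : Set (Fin ν → ℤ)} {F : A → A}
    (hF : IsCondExp a τ K F) {x : A} (hx : x ∈ carSub a K) : F x = x :=
  condExp_unique hτtracial hτfaithful hF hx fun _ _ => rfl

lemma condExp_sub (hτtracial : ∀ x y : A, τ (x * y) = τ (y * x))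
    (hτfaithful : ∀ x : A, τ (star x * x) = 0 → x = 0) {K : Set (Fin ν → ℤ)} {F : A → A}
    (hF : IsCondExp a τ K F) (x y : A) : F (x - y) = F x - F y :=
  condExp_unique hτtracial hτfaithful hF (sub_mem (hF.1 x) (hF.1 y)) fun b hb => by
    rw [sub_mul, sub_mul, map_sub, map_sub, hF.2 x b hb, hF.2 y b hb]

lemma condExp_star (hτ1 : τ 1 = 1) (hτpos : ∀ x : A, 0 ≤ τ (star x * x))
    (hτtracial : ∀ x y : A, τ (x * y) = τ (y * x))
    (hτfaithful : ∀ x : A, τ (star x * x) = 0 → x = 0) {K : Set (Fin ν → ℤ)} {F : A → A}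
    (hF : IsCondExp a τ K F) (x : A) : F (star x) = star (F x) :=
  condExp_unique hτtracial hτfaithful hF (star_mem (hF.1 x)) fun b hb => by
    have key : ∀ z : A, τ (star z * b) = star (τ (z * star b)) := fun z => by
      rw [← map_star_of_pos hτ1 hτpos, star_mul, star_star, hτtracial]
    rw [key, key, hF.2 x _ (star_mem hb)]

lemma condExp_parity (hτtracial : ∀ x y : A, τ (x * y) = τ (y * x))
    (hτfaithful : ∀ x : A, τ (star x * x) = 0 → x = 0) (hΘ : ∀ i, Θ (a i) = -a i)
    (hτΘ : ∀ x, τ (Θ x) = τ x) {K : Set (Fin ν → ℤ)} {F : A → A}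
    (hF : IsCondExp a τ K F) (x : A) : F (Θ x) = Θ (F x) :=
  condExp_unique hτtracial hτfaithful hF (parity_mem_carSub hΘ (hF.1 x)) fun b hb => by
    have hΘ' : ∀ i, Θ.symm (a i) = -a i := fun i => by
      rw [← neg_eq_iff_eq_neg, ← map_neg, ← hΘ, StarAlgEquiv.symm_apply_apply]
    have key : ∀ z : A, τ (Θ z * b) = τ (z * Θ.symm b) := fun z => by
      rw [← hτΘ (z * Θ.symm b), map_mul Θ, StarAlgEquiv.apply_symm_apply]
    rw [key, key, hF.2 x _ (parity_mem_carSub hΘ' hb)]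

end CondExp

/-! ### Local Hamiltonians -/

section Hamiltonian

variable {τ : A →L[ℂ] ℂ} {Θ : A ≃⋆ₐ[ℂ] A} {E : Set (Fin ν → ℤ) → A → A} {δ : A → A}

/-- An even element of `A(I^c)` commutes with the Majorana operators of `I`. -/
lemma maj_commute_of_even
    (hCAR₁ : ∀ i j, star (a i) * a j + a j * star (a i) = if i = j then (1 : A) else 0)
    (hCAR₂ : ∀ i j, a i * a j + a j * a i = 0) (hΘ : ∀ i, Θ (a i) = -a i)
    {I : Set (Fin ν → ℤ)} {y : A} (hy : y ∈ carSub a Iᶜ) (hΘy : Θ y = y)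
    {k : (Fin ν → ℤ) × Bool} (hk : k.1 ∈ I) : maj a k * y = y * maj a k := by
  have h := maj_mul_eq_parity_mul (maj_mul_maj hCAR₁ hCAR₂) (parity_maj hΘ)
    (s := {k | k.1 ∈ Iᶜ}) (k := k) (by simpa using hk) ((carSub_eq_majAlg _ _).1 hy)
  rwa [hΘy] at h

/-- A derivation that is implemented by `H` on the Majorana operators of a finite region is
implemented by `H` on the whole algebra of that region.  No continuity of `δ` is needed, the
local algebras being finite-dimensional. -/
lemma implements_of_maj
    (hCAR₁ : ∀ i j, star (a i) * a j + a j * star (a i) = if i = j then (1 : A) else 0)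
    (hCAR₂ : ∀ i j, a i * a j + a j * a i = 0)
    (hδadd : ∀ x ∈ carLoc a, ∀ y ∈ carLoc a, δ (x + y) = δ x + δ y)
    (hδsmul : ∀ (c : ℂ), ∀ x ∈ carLoc a, δ (c • x) = c • δ x)
    (hδLeibniz : ∀ x ∈ carLoc a, ∀ y ∈ carLoc a, δ (x * y) = δ x * y + x * δ y)
    (hδ0 : δ 0 = 0) (hδ1 : δ 1 = 0) {I : Finset (Fin ν → ℤ)} {H : A}
    (hH : ∀ k : (Fin ν → ℤ) × Bool, k.1 ∈ I →
      δ (maj a k) = Complex.I • (H * maj a k - maj a k * H)) :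
    ∀ x ∈ carSub a (I : Set (Fin ν → ℤ)), δ x = Complex.I • (H * x - x * H) := by
  intro x hx
  have hfin : {k : (Fin ν → ℤ) × Bool | k.1 ∈ (I : Set (Fin ν → ℤ))}.Finite := by
    refine (I ×ˢ (Finset.univ : Finset Bool)).finite_toSet.subset fun k hk => ?_
    simpa using hk
  have hx' := majAlg_finset_le_adjoin (maj_sq hCAR₁ hCAR₂) (maj_mul_maj hCAR₁ hCAR₂) hfin
    ((carSub_eq_majAlg _ _).1 hx)
  let W : Submodule ℂ A :=
    { carrier := {y | y ∈ carSub a (I : Set (Fin ν → ℤ)) ∧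
        δ y = Complex.I • (H * y - y * H)}
      zero_mem' := by simp [hδ0, zero_mem]
      add_mem' := by
        rintro x y ⟨hx, hx'⟩ ⟨hy, hy'⟩
        refine ⟨add_mem hx hy, ?_⟩
        rw [hδadd x (mem_carLoc hx) y (mem_carLoc hy), hx', hy', ← smul_add]
        congr 1
        noncomm_ring
      smul_mem' := by
        rintro c x ⟨hx, hx'⟩
        refine ⟨StarSubalgebra.smul_mem _ hx c, ?_⟩
        rw [hδsmul c x (mem_carLoc hx), hx', smul_comm, smul_sub, mul_smul_comm,
          smul_mul_assoc] }
  have hW : x ∈ W := by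
    refine adjoin_le_of_left_stable W ⟨one_mem _, by simp [hδ1]⟩ ?_ hx'
    rintro k hk y ⟨hy, hy'⟩
    have hkm := maj_mem_carSub (a := a) hk
    refine ⟨mul_mem hkm hy, ?_⟩
    rw [hδLeibniz _ (mem_carLoc hkm) _ (mem_carLoc hy), hy', hH k hk, smul_mul_assoc,
      mul_smul_comm, ← smul_add]
    congr 1
    noncomm_ring
  exact hW.2

/-- Subtracting `E_{I^c}(H)` from an even self-adjoint generator on `A(I)` makes it standard. -/
lemma isStd_sub_condExp
    (hCAR₁ : ∀ i j, star (a i) * a j + a j * star (a i) = if i = j then (1 : A) else 0)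
    (hCAR₂ : ∀ i j, a i * a j + a j * a i = 0) (hgen : carSub a Set.univ = ⊤)
    (hτ1 : τ 1 = 1) (hτpos : ∀ x : A, 0 ≤ τ (star x * x))
    (hτtracial : ∀ x y : A, τ (x * y) = τ (y * x))
    (hτfaithful : ∀ x : A, τ (star x * x) = 0 → x = 0) (hΘ : ∀ i, Θ (a i) = -a i)
    (hE : ∀ I : Set (Fin ν → ℤ), IsCondExp a τ I (E I))
    (hδadd : ∀ x ∈ carLoc a, ∀ y ∈ carLoc a, δ (x + y) = δ x + δ y)
    (hδsmul : ∀ (c : ℂ), ∀ x ∈ carLoc a, δ (c • x) = c • δ x)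
    (hδLeibniz : ∀ x ∈ carLoc a, ∀ y ∈ carLoc a, δ (x * y) = δ x * y + x * δ y)
    (hδ0 : δ 0 = 0) (hδ1 : δ 1 = 0)
    {I : Finset (Fin ν → ℤ)} {H : A} (hstar : star H = H) (heven : Θ H = H)
    (hH : ∀ k : (Fin ν → ℤ) × Bool, k.1 ∈ I →
      δ (maj a k) = Complex.I • (H * maj a k - maj a k * H)) :
    IsStdLocalHamiltonian a Θ E δ I (H - E ((I : Set (Fin ν → ℤ))ᶜ) H) := by
  have hEI := hE (I : Set (Fin ν → ℤ))ᶜ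
  have hEeven : Θ (E ((I : Set (Fin ν → ℤ))ᶜ) H) = E ((I : Set (Fin ν → ℤ))ᶜ) H := by
    rw [← condExp_parity hτtracial hτfaithful hΘ
      (trace_parity hCAR₁ hCAR₂ hgen hτtracial hΘ) hEI, heven]
  refine ⟨?_, ?_, ?_, ?_⟩
  · rw [star_sub, hstar, ← condExp_star hτ1 hτpos hτtracial hτfaithful hEI, hstar]
  · rw [map_sub, heven, hEeven]
  · refine implements_of_maj hCAR₁ hCAR₂ hδadd hδsmul hδLeibniz hδ0 hδ1 fun k hk => ?_
    have hc := maj_commute_of_even hCAR₁ hCAR₂ hΘ (hEI.1 H) hEeven (k := k) hk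
    rw [hH k hk, sub_mul, mul_sub, hc]
    congr 1
    abel
  · rw [condExp_sub hτtracial hτfaithful hEI, condExp_of_mem hτtracial hτfaithful hEI (hEI.1 H),
      sub_self]

/-- The difference of two standard Hamiltonians is even and commutes with `A(I)`, so it lies in
`A(I^c)`, where `E_{I^c}` is the identity; but `E_{I^c}` also kills it. -/
lemma isStd_unique
    (hCAR₁ : ∀ i j, star (a i) * a j + a j * star (a i) = if i = j then (1 : A) else 0)
    (hCAR₂ : ∀ i j, a i * a j + a j * a i = 0) (hgen : carSub a Set.univ = ⊤)
    (hτtracial : ∀ x y : A, τ (x * y) = τ (y * x))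
    (hτfaithful : ∀ x : A, τ (star x * x) = 0 → x = 0) (hΘ : ∀ i, Θ (a i) = -a i)
    (hE : ∀ I : Set (Fin ν → ℤ), IsCondExp a τ I (E I))
    {I : Finset (Fin ν → ℤ)} {H H' : A} (h : IsStdLocalHamiltonian a Θ E δ I H)
    (h' : IsStdLocalHamiltonian a Θ E δ I H') : H = H' := by
  obtain ⟨-, heven, hH, hE0⟩ := h
  obtain ⟨-, heven', hH', hE0'⟩ := h'
  have hEI := hE (I : Set (Fin ν → ℤ))ᶜ
  have hcomm : ∀ k ∈ I ×ˢ (Finset.univ : Finset Bool),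
      maj a k * (H - H') = (H - H') * maj a k := by
    intro k hk
    have hk : k.1 ∈ (I : Set (Fin ν → ℤ)) := by simpa using hk
    have e := (hH _ (maj_mem_carSub hk)).symm.trans (hH' _ (maj_mem_carSub hk))
    have e := smul_right_injective A Complex.I_ne_zero e
    rw [mul_sub, sub_mul, sub_eq_sub_iff_add_eq_add]
    rw [sub_eq_sub_iff_add_eq_add] at e
    rw [add_comm, ← e, add_comm]
  have hmem := mem_majAlg_compl (maj_sq hCAR₁ hCAR₂) (maj_mul_maj hCAR₁ hCAR₂) (parity_maj hΘ)
    (D := H - H') (by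
      have h : H - H' ∈ carSub a Set.univ := by rw [hgen]; trivial
      simpa [carSub_eq_majAlg] using h) (by rw [map_sub, heven, heven']) _ hcomm
  have hmem' : H - H' ∈ carSub a (I : Set (Fin ν → ℤ))ᶜ := by
    rw [carSub_eq_majAlg]
    convert hmem using 2
    ext k
    simp
  rw [← sub_eq_zero, ← condExp_of_mem hτtracial hτfaithful hEI hmem',
    condExp_sub hτtracial hτfaithful hEI, hE0, hE0', sub_zero]

/-- Averaging a generator over the adjoint and over parity makes it self-adjoint and even:
if `K`, `-K*`, `Θ K` and `-Θ (K*)` all generate `d`, then so does their mean. -/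
lemma exists_average {κ : Type*} (hΘΘ : ∀ x, Θ (Θ x) = x) (γ d : κ → A) (s : Set κ) {K : A}
    (h₁ : ∀ k ∈ s, d k = K * γ k - γ k * K)
    (h₂ : ∀ k ∈ s, d k = -star K * γ k - γ k * -star K)
    (h₃ : ∀ k ∈ s, d k = Θ K * γ k - γ k * Θ K)
    (h₄ : ∀ k ∈ s, d k = -Θ (star K) * γ k - γ k * -Θ (star K)) :
    ∃ H : A, star H = H ∧ Θ H = H ∧ ∀ k ∈ s, d k = Complex.I • (H * γ k - γ k * H) := by
  obtain ⟨M, hM⟩ : ∃ M, M = K - star K + Θ K - Θ (star K) := ⟨_, rfl⟩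
  have hMstar : star M = -M := by
    rw [hM]
    simp only [star_add, star_sub, star_star, ← map_star]
    abel
  have hMΘ : Θ M = M := by
    rw [hM]
    simp only [map_add, map_sub, hΘΘ]
    abel
  refine ⟨(-Complex.I / 4) • M, ?_, ?_, fun k hk => ?_⟩
  · have hc : star (-Complex.I / 4) = Complex.I / 4 := by simp
    rw [star_smul, hc, hMstar, smul_neg, ← neg_smul, neg_div]
  · rw [map_smul, hMΘ]
  · have e : (4 : ℂ) • d k = M * γ k - γ k * M := by
      calc (4 : ℂ) • d k = d k + d k + d k + d k := by module
        _ = (K * γ k - γ k * K) + (-star K * γ k - γ k * -star K) +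
            (Θ K * γ k - γ k * Θ K) + (-Θ (star K) * γ k - γ k * -Θ (star K)) :=
          congrArg₂ _ (congrArg₂ _ (congrArg₂ _ (h₁ k hk) (h₂ k hk)) (h₃ k hk)) (h₄ k hk)
        _ = M * γ k - γ k * M := by
          rw [hM]
          simp only [sub_mul, mul_sub, add_mul, mul_add, neg_mul, mul_neg]
          abel
    rw [smul_mul_assoc, mul_smul_comm, ← smul_sub, ← e, smul_smul, smul_smul]
    have hc : Complex.I * (-Complex.I / 4) * 4 = 1 := by
      linear_combination -Complex.I_mul_I
    rw [hc, one_smul]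

/-- Any generator on the Majorana operators of `I` can be averaged, because `δ` commutes with the
adjoint and with parity. -/
lemma exists_even_selfAdjoint_generator
    (hCAR₁ : ∀ i j, star (a i) * a j + a j * star (a i) = if i = j then (1 : A) else 0)
    (hCAR₂ : ∀ i j, a i * a j + a j * a i = 0) (hgen : carSub a Set.univ = ⊤)
    (hΘ : ∀ i, Θ (a i) = -a i)
    (hδadd : ∀ x ∈ carLoc a, ∀ y ∈ carLoc a, δ (x + y) = δ x + δ y)
    (hδLeibniz : ∀ x ∈ carLoc a, ∀ y ∈ carLoc a, δ (x * y) = δ x * y + x * δ y)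
    (hδstar : ∀ x ∈ carLoc a, δ (star x) = star (δ x))
    (hδΘ : ∀ x ∈ carLoc a, δ (Θ x) = Θ (δ x))
    (hδ0 : δ 0 = 0) (hδ1 : δ 1 = 0) (I : Finset (Fin ν → ℤ)) :
    ∃ H : A, star H = H ∧ Θ H = H ∧ ∀ k : (Fin ν → ℤ) × Bool, k.1 ∈ I →
      δ (maj a k) = Complex.I • (H * maj a k - maj a k * H) := by
  have hloc2 : ∀ j k : (Fin ν → ℤ) × Bool, ∃ F : Finset (Fin ν → ℤ),
      maj a j ∈ carSub a (F : Set (Fin ν → ℤ)) ∧ maj a k ∈ carSub a (F : Set (Fin ν → ℤ)) :=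
    fun j k => ⟨{j.1, k.1}, maj_mem_carSub (by simp), maj_mem_carSub (by simp)⟩
  have hloc : ∀ k, maj a k ∈ carLoc a := fun k => by
    obtain ⟨F, hF, -⟩ := hloc2 k k
    exact mem_carLoc hF
  have hd₁ : ∀ k, δ (maj a k) * maj a k + maj a k * δ (maj a k) = 0 := fun k => by
    rw [← hδLeibniz _ (hloc k) _ (hloc k), maj_sq hCAR₁ hCAR₂, hδ1]
  have hd₂ : ∀ j k, j ≠ k → δ (maj a j) * maj a k + maj a j * δ (maj a k) +
      (δ (maj a k) * maj a j + maj a k * δ (maj a j)) = 0 := fun j k hjk => by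
    obtain ⟨F, hj, hk⟩ := hloc2 j k
    rw [← hδLeibniz _ (hloc j) _ (hloc k), ← hδLeibniz _ (hloc k) _ (hloc j),
      ← hδadd _ (mem_carLoc (mul_mem hj hk)) _ (mem_carLoc (mul_mem hk hj)),
      maj_anticomm hCAR₁ hCAR₂, if_neg hjk, hδ0]
  obtain ⟨K, hK⟩ := exists_generator (maj_sq hCAR₁ hCAR₂) (maj_mul_maj hCAR₁ hCAR₂)
    (fun k => δ (maj a k)) hd₁ hd₂ (I ×ˢ (Finset.univ : Finset Bool))
  have hK : ∀ k : (Fin ν → ℤ) × Bool, k.1 ∈ I → δ (maj a k) = K * maj a k - maj a k * K :=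
    fun k hk => hK k (by simpa using hk)
  have hKstar : ∀ k : (Fin ν → ℤ) × Bool, k.1 ∈ I →
      δ (maj a k) = (-star K) * maj a k - maj a k * (-star K) := fun k hk => by
    have h := hδstar _ (hloc k)
    rw [star_maj, hK k hk, star_sub, star_mul, star_mul, star_maj] at h
    rw [hK k hk, h, neg_mul, mul_neg, neg_sub_neg]
  have hneg : ∀ k, δ (-maj a k) = -δ (maj a k) := fun k => by
    obtain ⟨F, hF, -⟩ := hloc2 k k
    have hm : -maj a k ∈ carLoc a := mem_carLoc (neg_mem hF)
    have h := hδadd _ hm _ (hloc k)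
    rw [neg_add_cancel, hδ0] at h
    exact eq_neg_of_add_eq_zero_left h.symm
  have hΘinv : ∀ L : A, (∀ k : (Fin ν → ℤ) × Bool, k.1 ∈ I →
      δ (maj a k) = L * maj a k - maj a k * L) → ∀ k : (Fin ν → ℤ) × Bool, k.1 ∈ I →
      δ (maj a k) = Θ L * maj a k - maj a k * Θ L := fun L hL k hk => by
    have h := hδΘ _ (hloc k)
    rw [parity_maj hΘ, hneg] at h
    have h' : Θ (δ (maj a k)) = -(Θ L * maj a k - maj a k * Θ L) := by
      rw [hL k hk, map_sub, map_mul, map_mul, parity_maj hΘ, mul_neg, neg_mul, neg_sub_neg,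
        neg_sub]
    exact neg_injective (h.trans h')
  have hΘΘ := parity_parity hgen hΘ
  have h1 := hΘinv K hK
  have h2 := hΘinv (-star K) hKstar
  simp only [map_neg] at h2
  exact exists_average hΘΘ (maj a) (fun k => δ (maj a k)) {k | k.1 ∈ I} hK hKstar h1 h2

end Hamiltonian

end CAR

/-- Let `δ` be a `*`-derivation with domain the local algebra `A_loc` of the
CAR algebra `A`, commuting with the parity automorphism `Θ`.  Then for every finite subset `I`
of `ℤ^ν` there is a unique `H(I) ∈ A` with: `H(I)* = H(I)`, `Θ(H(I)) = H(I)`,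
`δ x = i [H(I), x]` for all `x ∈ A(I)`, and `E_{I^c}(H(I)) = 0`.  Moreover, for finite subsets
`I ⊆ J` one has `H(I) = H(J) − E_{I^c}(H(J))`. -/
theorem car_standard_local_hamiltonians
    {ν : ℕ} {A : Type*} [CStarAlgebra A]
    (a : (Fin ν → ℤ) → A)
    (hCAR₁ : ∀ i j, star (a i) * a j + a j * star (a i) = if i = j then (1 : A) else 0)
    (hCAR₂ : ∀ i j, a i * a j + a j * a i = 0)
    (hgen : carSub a Set.univ = ⊤)
    (τ : A →L[ℂ] ℂ)
    (hτ1 : τ 1 = 1)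
    (hτpos : ∀ x : A, 0 ≤ τ (star x * x))
    (hτtracial : ∀ x y : A, τ (x * y) = τ (y * x))
    (hτfaithful : ∀ x : A, τ (star x * x) = 0 → x = 0)
    (Θ : A ≃⋆ₐ[ℂ] A)
    (hΘ : ∀ i, Θ (a i) = - a i)
    -- the family of conditional expectations
    (E : Set (Fin ν → ℤ) → A → A)
    (hE : ∀ I : Set (Fin ν → ℤ), IsCondExp a τ I (E I))
    -- `δ` is a `*`-derivation with domain `A_loc`, commuting with `Θ`
    (δ : A → A)
    (hδadd : ∀ x ∈ carLoc a, ∀ y ∈ carLoc a, δ (x + y) = δ x + δ y)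
    (hδsmul : ∀ (c : ℂ), ∀ x ∈ carLoc a, δ (c • x) = c • δ x)
    (hδLeibniz : ∀ x ∈ carLoc a, ∀ y ∈ carLoc a, δ (x * y) = δ x * y + x * δ y)
    (hδstar : ∀ x ∈ carLoc a, δ (star x) = star (δ x))
    (hδΘ : ∀ x ∈ carLoc a, δ (Θ x) = Θ (δ x)) :
    (∀ I : Finset (Fin ν → ℤ), ∃! H : A, IsStdLocalHamiltonian a Θ E δ I H) ∧
    (∀ I J : Finset (Fin ν → ℤ), I ⊆ J → ∀ HI HJ : A,
      IsStdLocalHamiltonian a Θ E δ I HI → IsStdLocalHamiltonian a Θ E δ J HJ →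
      HI = HJ - E ((I : Set (Fin ν → ℤ))ᶜ) HJ) := by
  have h1loc : (1 : A) ∈ carLoc a := mem_carLoc (I := ∅) (one_mem _)
  have hδ0 : δ 0 = 0 := by simpa using hδsmul 0 1 h1loc
  have hδ1 : δ 1 = 0 := by simpa using hδLeibniz 1 h1loc 1 h1loc
  refine ⟨fun I => ?_, fun I J hIJ HI HJ hHI hHJ => ?_⟩
  · obtain ⟨H, hstar, heven, hH⟩ := exists_even_selfAdjoint_generator hCAR₁ hCAR₂ hgen hΘ hδadd
      hδLeibniz hδstar hδΘ hδ0 hδ1 I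
    have hstd := isStd_sub_condExp hCAR₁ hCAR₂ hgen hτ1 hτpos hτtracial hτfaithful hΘ hE hδadd
      hδsmul hδLeibniz hδ0 hδ1 hstar heven hH
    exact ⟨_, hstd, fun H' hH' =>
      isStd_unique hCAR₁ hCAR₂ hgen hτtracial hτfaithful hΘ hE hH' hstd⟩
  · obtain ⟨hstar, heven, hH, -⟩ := hHJ
    refine isStd_unique hCAR₁ hCAR₂ hgen hτtracial hτfaithful hΘ hE hHI ?_
    exact isStd_sub_condExp hCAR₁ hCAR₂ hgen hτ1 hτpos hτtracial hτfaithful hΘ hE hδadd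
      hδsmul hδLeibniz hδ0 hδ1 hstar heven fun k hk => hH _ (maj_mem_carSub (hIJ hk))
end
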